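/- arXiv:1501.03420 — 4 statements merged into one kernel-verified Lean document; each statement's English description precedes it below -/
import Mathlib

section
/- Let C be a Jacobi matrix with weights {a_n} and diagonal {b_n}. Suppose there is a positive sequence {α_n} such that: (a) a_n → ∞; (b) ∑_{n≥1} [ (a_{n+1}/a_n)(α_{n+1}/α_n) − (a_n/a_{n−1})(α_{n−1}/α_n) ]⁻ < ∞; (c) ∑_{n≥1} (1/a_{n−1}) | a_{n−1}/a_n − α_{n−1}/α_n | < ∞; (d) ∑_{n≥1} | b_{n+1}/a_n − (b_n/a_{n−1})(α_{n−1}/α_n) | < ∞; (e) ∑_{n≥0} 1/(a_n α_n) = ∞; (f) (α_{n−1}/α_n)(a_n/a_{n−1}) → 1; (g) limsup_{n→∞} |b_n|/a_n < 2. Then C is self-adjoint, C has no eigenvalues (σ_p(C) = ∅), and σ(C) = ℝ. -/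
/-!
Let `u` be a real generalized eigenvector for a real parameter `lam`. The quadratic form
`S n = aₙ αₙ uₙ² - (lam - bₙ₊₁) αₙ uₙ uₙ₊₁ + aₙ₊₁ αₙ₊₁ uₙ₊₁²` (`turanS`) satisfies an exact
increment formula (`turanS_step`) whose coefficients, relative to `aₙ₊₁ αₙ₊₁`, are the quantities
of the three summability hypotheses. The hypotheses `aₙ → ∞`, `(αₙ₋₁/αₙ)(aₙ/aₙ₋₁) → 1` and
`limsup |bₙ|/aₙ < 2` make `S n` eventually comparable to
`V n = aₙ αₙ uₙ² + aₙ₊₁ αₙ₊₁ uₙ₊₁²`, and `aₙ αₙ` eventually drops by at most a factor `2` per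
step. Hence `S n ≤ S (n + 1) (1 + εₙ)` with `∑ εₙ < ∞`, so `S` is bounded away from `0` unless
`u = 0`, and divergence of `∑ 1 / (aₙ αₙ)` shows `u ∉ ℓ²` (`genEig_l2_eq_zero`).

Everything else follows from this absence of ℓ² solutions (`NoL2GenEig`):

* If the boundary form of two elements `f, g` of the maximal domain did not vanish at infinity,
  every solution of the recurrence at parameter `0` would be in ℓ², by Cramer's rule and
  Gronwall's inequality (`wronsk_limit_eq_zero`). So the maximal operator is symmetric; testing
  against basis vectors shows its adjoint is contained in it (`jacobi_selfAdjoint`).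
* Eigenvalues of a symmetric operator are real, and a real one would have an ℓ² generalized
  eigenvector (`jacobi_no_eigen`).
* For real `r`, a solution of `(C - r) x = e₀` would again be an ℓ² generalized eigenvector, so
  `r` is in the spectrum (`real_mem_spectrum`). For nonreal `l`, the range of `C - l` is closed by
  `|Im l| ‖x‖ ≤ ‖(C - l) x‖` and has trivial orthogonal complement (`nonreal_surjective`).
-/

open Filter Topology

noncomputable section

/-- Membership in the weighted ℓ² space with weight `w`. -/
def MemL2w (w : ℕ → ℝ) (f : ℕ → ℂ) : Prop :=
  Summable fun n => w n * ‖f n‖ ^ 2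

/-- The weighted ℓ² inner product. -/
def innerW (w : ℕ → ℝ) (f g : ℕ → ℂ) : ℂ :=
  ∑' n, (w n : ℂ) * star (f n) * g n

/-- The formal tridiagonal action of the Jacobi matrix with off-diagonal entries `a`
and diagonal entries `b`:  `(Cx)₀ = b₀x₀ + a₀x₁`,
`(Cx)ₙ = aₙ₋₁xₙ₋₁ + bₙxₙ + aₙxₙ₊₁` for `n ≥ 1`. -/
def jacobiAct (a b : ℕ → ℝ) (x : ℕ → ℂ) : ℕ → ℂ
  | 0 => (b 0 : ℂ) * x 0 + (a 0 : ℂ) * x 1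
  | n + 1 => (a n : ℂ) * x n + (b (n + 1) : ℂ) * x (n + 1) + (a (n + 1) : ℂ) * x (n + 2)

/-- The maximal domain of the formal operator `T` inside the weighted ℓ² space. -/
def DomW (w : ℕ → ℝ) (T : (ℕ → ℂ) → ℕ → ℂ) : Set (ℕ → ℂ) :=
  {x | MemL2w w x ∧ MemL2w w (T x)}

/-- `T`, on its maximal domain in weighted ℓ², is self-adjoint:
the graph of the adjoint operator coincides with the graph of `T`. -/
def IsSelfAdjointW (w : ℕ → ℝ) (T : (ℕ → ℂ) → ℕ → ℂ) : Prop :=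
  ∀ y z : ℕ → ℂ, MemL2w w y → MemL2w w z →
    ((∀ x ∈ DomW w T, innerW w (T x) y = innerW w x z) ↔ (y ∈ DomW w T ∧ T y = z))

/-- The point spectrum (set of eigenvalues) of `T` on its maximal domain. -/
def eigenW (w : ℕ → ℝ) (T : (ℕ → ℂ) → ℕ → ℂ) : Set ℂ :=
  {l | ∃ x ∈ DomW w T, x ≠ 0 ∧ T x = fun n => l * x n}

/-- The spectrum of `T`: those `l` for which `T - l` is not a bijection from the maximal
domain onto the weighted ℓ² space (for a closed operator this is the usual spectrum). -/
def spectrumW (w : ℕ → ℝ) (T : (ℕ → ℂ) → ℕ → ℂ) : Set ℂ :=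
  {l | ¬ ((∀ x ∈ DomW w T, T x = (fun n => l * x n) → x = 0) ∧
          ∀ y : ℕ → ℂ, MemL2w w y → ∃ x ∈ DomW w T, (fun n => T x n - l * x n) = y)}

/-- The essential spectrum: the set of accumulation points of the spectrum. -/
def essSpectrumW (w : ℕ → ℝ) (T : (ℕ → ℂ) → ℕ → ℂ) : Set ℂ :=
  {z | AccPt z (𝓟 (spectrumW w T))}

/-- `u` is a generalized eigenvector of the Jacobi matrix `(a, b)` associated with `lam`:
`(u 0, u 1) ≠ (0, 0)` and `aₙ uₙ₊₁ = (lam − bₙ) uₙ − aₙ₋₁ uₙ₋₁` for all `n ≥ 1`. -/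
def IsGenEig (a b : ℕ → ℝ) (lam : ℝ) (u : ℕ → ℝ) : Prop :=
  ¬(u 0 = 0 ∧ u 1 = 0) ∧
  ∀ n : ℕ, a (n + 1) * u (n + 2) = (lam - b (n + 1)) * u (n + 1) - a n * u n

/-! ### Gronwall bound -/

lemma gronwall_bdd {X ε : ℕ → ℝ} {N : ℕ} (hX : ∀ n, N ≤ n → 0 ≤ X n) (hε : ∀ n, 0 ≤ ε n)
    (hs : Summable ε) (h : ∀ n, N ≤ n → X (n + 1) ≤ X n * (1 + ε n)) :
    ∃ M, ∀ n, N ≤ n → X n ≤ M := by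
  have key : ∀ n, N ≤ n → X n ≤ X N * Real.exp (∑ k ∈ Finset.range n, ε k) := by
    intro n hn
    induction n, hn using Nat.le_induction with
    | base =>
      have : 1 ≤ Real.exp (∑ k ∈ Finset.range N, ε k) :=
        Real.one_le_exp (Finset.sum_nonneg fun i _ => hε i)
      nlinarith [hX N le_rfl]
    | succ n hn ih =>
      rw [Finset.sum_range_succ, Real.exp_add, ← mul_assoc]
      have h1 : 1 + ε n ≤ Real.exp (ε n) := by linarith [Real.add_one_le_exp (ε n)]
      exact (h n hn).trans (mul_le_mul ih h1 (by linarith [hε n]) ((hX n hn).trans ih))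
  refine ⟨X N * Real.exp (∑' k, ε k), fun n hn => (key n hn).trans ?_⟩
  have := hs.sum_le_tsum (Finset.range n) (fun i _ => hε i)
  gcongr
  exact hX N le_rfl

/-! ### Real generalized eigenvectors are not square summable -/

/-- The quadratic form `S n` in `(u n, u (n + 1))` that is almost nondecreasing along
generalized eigenvectors. -/
def turanS (a b α : ℕ → ℝ) (lam : ℝ) (u : ℕ → ℝ) (n : ℕ) : ℝ :=
  a n * α n * u n ^ 2 - (lam - b (n + 1)) * α n * u n * u (n + 1)
    + a (n + 1) * α (n + 1) * u (n + 1) ^ 2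

/-- The diagonal part of `turanS`, to which `turanS` is eventually comparable. -/
def turanV (a α : ℕ → ℝ) (u : ℕ → ℝ) (n : ℕ) : ℝ :=
  a n * α n * u n ^ 2 + a (n + 1) * α (n + 1) * u (n + 1) ^ 2

/-- Exact increment of `turanS`; the brackets are the quantities whose summability is assumed. -/
lemma turanS_step {a b α : ℕ → ℝ} (ha : ∀ n, 0 < a n) (hα : ∀ n, 0 < α n) {lam : ℝ} {u : ℕ → ℝ}
    (hu : ∀ n, a (n + 1) * u (n + 2) = (lam - b (n + 1)) * u (n + 1) - a n * u n) (n : ℕ) :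
    turanS a b α lam u (n + 1) - turanS a b α lam u n =
      a (n + 1) * α (n + 1) *
        ((a (n + 2) / a (n + 1) * (α (n + 2) / α (n + 1))
            - a (n + 1) / a n * (α n / α (n + 1))) * u (n + 2) ^ 2
          + (- lam * (1 / a n * (a n / a (n + 1) - α n / α (n + 1)))
            + (b (n + 2) / a (n + 1) - b (n + 1) / a n * (α n / α (n + 1))))
              * (u (n + 1) * u (n + 2))) := by
  have h0 : u n = ((lam - b (n + 1)) * u (n + 1) - a (n + 1) * u (n + 2)) / a n := by
    rw [eq_div_iff (ha n).ne']; linarith [hu n]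
  have := (ha n).ne'
  have := (ha (n + 1)).ne'
  have := (hα (n + 1)).ne'
  simp only [turanS, h0, add_assoc, Nat.reduceAdd]
  field_simp
  ring

/-- A cross term whose coefficient obeys `c² ≤ κ² A B` is dominated by `κ / 2` times the
diagonal form `A x² + B y²`. -/
lemma cross_le {A B c κ x y : ℝ} (hA : 0 < A) (hB : 0 < B) (hκ : 0 ≤ κ)
    (h : c ^ 2 ≤ κ ^ 2 * (A * B)) : |c * x * y| ≤ κ / 2 * (A * x ^ 2 + B * y ^ 2) := by
  have hV : 0 ≤ A * x ^ 2 + B * y ^ 2 := by positivity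
  apply abs_le_of_sq_le_sq _ (by positivity)
  calc (c * x * y) ^ 2 = c ^ 2 * (x * y) ^ 2 := by ring
    _ ≤ κ ^ 2 * (A * B) * (x * y) ^ 2 := by gcongr
    _ ≤ _ := by nlinarith [mul_nonneg (sq_nonneg κ) (sq_nonneg (A * x ^ 2 - B * y ^ 2))]

lemma genEig_l2_eq_zero
    {a b α : ℕ → ℝ} (ha : ∀ n, 0 < a n) (hα : ∀ n, 0 < α n)
    (h1 : Tendsto a atTop atTop)
    (h2 : Summable fun n : ℕ =>
      max (-(a (n + 2) / a (n + 1) * (α (n + 2) / α (n + 1))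
            - a (n + 1) / a n * (α n / α (n + 1)))) 0)
    (h3 : Summable fun n : ℕ => 1 / a n * |a n / a (n + 1) - α n / α (n + 1)|)
    (h4 : Summable fun n : ℕ => |b (n + 2) / a (n + 1) - b (n + 1) / a n * (α n / α (n + 1))|)
    (h5 : ¬ Summable fun n : ℕ => 1 / (a n * α n))
    (h6 : Tendsto (fun n => α n / α (n + 1) * (a (n + 1) / a n)) atTop (𝓝 1))
    (h7 : limsup (fun n => ((|b n| / a n : ℝ) : EReal)) atTop < ((2 : ℝ) : EReal))
    {lam : ℝ} {u : ℕ → ℝ}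
    (hu : ∀ n, a (n + 1) * u (n + 2) = (lam - b (n + 1)) * u (n + 1) - a n * u n)
    (hs : Summable fun n => u n ^ 2) : u 0 = 0 ∧ u 1 = 0 := by
  have hA : ∀ n, 0 < a n * α n := fun n => mul_pos (ha n) (hα n)
  -- two consecutive zeros propagate back to the origin
  have back : ∀ n, u n = 0 → u (n + 1) = 0 → u 0 = 0 ∧ u 1 = 0 := by
    intro n
    induction n with
    | zero => exact fun h h' => ⟨h, h'⟩
    | succ n ih =>
      intro h h'
      refine ih ?_ h
      have := hu n
      rw [h, h', mul_zero, mul_zero, zero_sub, eq_comm, neg_eq_zero] at this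
      exact (mul_eq_zero.1 this).resolve_left (ha n).ne'
  by_contra hne
  -- a uniform bound `κ < 2` for the normalized cross coefficient
  obtain ⟨κ, hκ0, hκ2, hκ⟩ : ∃ κ : ℝ, 0 ≤ κ ∧ κ < 2 ∧ ∀ᶠ n in atTop,
      ((lam - b (n + 1)) * α n) ^ 2 ≤ κ ^ 2 * ((a n * α n) * (a (n + 1) * α (n + 1))) := by
    obtain ⟨q0, hq0, hq0'⟩ := EReal.lt_iff_exists_real_btwn.1 h7
    have hq02 : q0 < 2 := by exact_mod_cast hq0'
    have e1 : ∀ᶠ n in atTop, |b n| / a n < q0 := by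
      filter_upwards [eventually_lt_of_limsup_lt hq0] with n hn
      exact_mod_cast hn
    have hq00 : 0 < q0 := by
      obtain ⟨n, hn⟩ := e1.exists
      exact lt_of_le_of_lt (div_nonneg (abs_nonneg _) (ha n).le) hn
    have e2 : ∀ᶠ n in atTop, |lam| / a n < (2 - q0) / 2 :=
      (h1.const_div_atTop |lam|).eventually_lt_const (by linarith)
    set q := (q0 + 2) / 2 with hq
    have hqpos : 0 < q := by linarith
    have hqlt : q < 2 := by linarith
    refine ⟨(q + 2) / 2, by linarith, by linarith, ?_⟩
    have e3 : ∀ᶠ n in atTop, α n / α (n + 1) * (a (n + 1) / a n) < ((q + 2) / 2) ^ 2 / q ^ 2 :=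
      h6.eventually_lt_const (by rw [lt_div_iff₀ (by positivity)]; nlinarith)
    filter_upwards [e3, (tendsto_add_atTop_nat 1).eventually e1,
      (tendsto_add_atTop_nat 1).eventually e2] with n hr hb hl
    have han := ha n
    have han1 := ha (n + 1)
    have hαn := hα n
    have hαn1 := hα (n + 1)
    have hc : |lam - b (n + 1)| ≤ q * a (n + 1) := by
      rw [div_lt_iff₀ han1] at hb hl
      have := abs_sub lam (b (n + 1))
      rw [hq]; nlinarith
    have hc2 : (lam - b (n + 1)) ^ 2 ≤ (q * a (n + 1)) ^ 2 := by
      rw [← sq_abs]; gcongr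
    have hr' : q ^ 2 * (α n / α (n + 1) * (a (n + 1) / a n)) ≤ ((q + 2) / 2) ^ 2 := by
      rw [lt_div_iff₀ (by positivity)] at hr; linarith
    calc ((lam - b (n + 1)) * α n) ^ 2 = (lam - b (n + 1)) ^ 2 * α n ^ 2 := by ring
      _ ≤ (q * a (n + 1)) ^ 2 * α n ^ 2 := by gcongr
      _ = q ^ 2 * (α n / α (n + 1) * (a (n + 1) / a n))
            * ((a n * α n) * (a (n + 1) * α (n + 1))) := by field_simp
      _ ≤ _ := by gcongr
  -- `a * α` is almost nondecreasing
  have hmono : ∀ᶠ n in atTop, a (n + 1) * α (n + 1) ≤ 2 * (a (n + 2) * α (n + 2)) := by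
    filter_upwards [h6.eventually_const_lt (show (3 / 4 : ℝ) < 1 by norm_num),
      h2.tendsto_atTop_zero.eventually_lt_const (show (0 : ℝ) < 1 / 4 by norm_num)] with n hr hB
    have h := lt_of_le_of_lt (le_max_left _ _) hB
    have h' : 1 / 2 < a (n + 2) / a (n + 1) * (α (n + 2) / α (n + 1)) := by
      rw [mul_comm (α n / _)] at hr; linarith
    rw [div_mul_div_comm, lt_div_iff₀ (hA _)] at h'
    linarith
  set ε : ℕ → ℝ := fun n =>
    max (-(a (n + 2) / a (n + 1) * (α (n + 2) / α (n + 1))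
            - a (n + 1) / a n * (α n / α (n + 1)))) 0
    + |lam| * (1 / a n * |a n / a (n + 1) - α n / α (n + 1)|)
    + |b (n + 2) / a (n + 1) - b (n + 1) / a n * (α n / α (n + 1))| with hε
  have hεs : Summable ε := (h2.add (h3.mul_left _)).add h4
  have hε0 : ∀ n, 0 ≤ ε n := fun n => by
    have := (ha n).le
    have : 0 ≤ |lam| * (1 / a n * |a n / a (n + 1) - α n / α (n + 1)|) := by positivity
    have := le_max_right (-(a (n + 2) / a (n + 1) * (α (n + 2) / α (n + 1))
            - a (n + 1) / a n * (α n / α (n + 1)))) 0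
    have := abs_nonneg (b (n + 2) / a (n + 1) - b (n + 1) / a n * (α n / α (n + 1)))
    simp only [hε]; linarith
  obtain ⟨N, hN⟩ := eventually_atTop.1 (hκ.and hmono)
  set S := turanS a b α lam u with hS
  set V := turanV a α u with hV
  have hcross : ∀ n, N ≤ n → (1 - κ / 2) * V n ≤ S n ∧ S n ≤ 2 * V n := by
    intro n hn
    have h := abs_le.1 (cross_le (x := u n) (y := u (n + 1)) (hA n) (hA (n + 1)) hκ0 (hN n hn).1)
    have hVn : 0 ≤ V n := by
      have := hA n; have := hA (n + 1); simp only [hV, turanV]; positivity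
    have e1 : S n = V n - (lam - b (n + 1)) * α n * u n * u (n + 1) := by
      simp only [hS, hV, turanS, turanV]; ring
    have e2 : V n = a n * α n * u n ^ 2 + a (n + 1) * α (n + 1) * u (n + 1) ^ 2 := rfl
    rw [← e2] at h
    constructor <;> nlinarith
  have hVpos : ∀ n, 0 < V n := by
    intro n
    have h0 : 0 < u n ^ 2 ∨ 0 < u (n + 1) ^ 2 := by
      by_contra! h
      exact hne (back n (pow_eq_zero_iff two_ne_zero |>.1 (le_antisymm h.1 (sq_nonneg _)))
        (pow_eq_zero_iff two_ne_zero |>.1 (le_antisymm h.2 (sq_nonneg _))))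
    have h2 := hA n
    have h3 := hA (n + 1)
    simp only [hV, turanV]
    rcases h0 with h0 | h0 <;> positivity
  have hδ : 0 < 1 - κ / 2 := by linarith
  have hSpos : ∀ n, N ≤ n → 0 < S n := fun n hn =>
    lt_of_lt_of_le (mul_pos hδ (hVpos n)) (hcross n hn).1
  have hstep : ∀ n, N ≤ n → S n ≤ S (n + 1) * (1 + 2 / (1 - κ / 2) * ε n) := by
    intro n hn
    have hst := turanS_step ha hα hu n
    rw [← hS] at hst
    set B := a (n + 2) / a (n + 1) * (α (n + 2) / α (n + 1))
            - a (n + 1) / a n * (α n / α (n + 1)) with hB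
    set C := a n / a (n + 1) - α n / α (n + 1) with hC
    set D := b (n + 2) / a (n + 1) - b (n + 1) / a n * (α n / α (n + 1)) with hD
    have hεn : ε n = max (-B) 0 + |lam| * (1 / a n * |C|) + |D| := rfl
    have hE : |-lam * (1 / a n * C) + D| ≤ |lam| * (1 / a n * |C|) + |D| := by
      refine (abs_add_le _ _).trans_eq ?_
      rw [abs_mul, abs_mul, abs_neg, abs_of_pos (one_div_pos.2 (ha n))]
    set E := -lam * (1 / a n * C) + D with hEdef
    have hxy : |u (n + 1) * u (n + 2)| ≤ u (n + 1) ^ 2 + u (n + 2) ^ 2 := by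
      rw [abs_le]; constructor <;>
        nlinarith [sq_nonneg (u (n + 1) + u (n + 2)), sq_nonneg (u (n + 1) - u (n + 2))]
    have hcr : -((|lam| * (1 / a n * |C|) + |D|) * (u (n + 1) ^ 2 + u (n + 2) ^ 2))
        ≤ E * (u (n + 1) * u (n + 2)) := by
      refine (neg_le_neg ?_).trans (neg_abs_le _)
      rw [abs_mul]
      exact mul_le_mul hE hxy (abs_nonneg _) ((abs_nonneg _).trans hE)
    have hBB : -(max (-B) 0 * (u (n + 1) ^ 2 + u (n + 2) ^ 2)) ≤ B * u (n + 2) ^ 2 := by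
      have e1 := mul_le_mul_of_nonneg_right (le_max_left (-B) 0) (sq_nonneg (u (n + 2)))
      have e2 := mul_nonneg (le_max_right (-B) 0) (sq_nonneg (u (n + 1)))
      linarith
    have hin : -(ε n * (u (n + 1) ^ 2 + u (n + 2) ^ 2))
        ≤ B * u (n + 2) ^ 2 + E * (u (n + 1) * u (n + 2)) := by
      rw [hεn]; linarith
    have hAV : a (n + 1) * α (n + 1) * (u (n + 1) ^ 2 + u (n + 2) ^ 2) ≤ 2 * V (n + 1) := by
      have := mul_le_mul_of_nonneg_right (hN n hn).2 (sq_nonneg (u (n + 2)))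
      have := mul_nonneg (hA (n + 1)).le (sq_nonneg (u (n + 1)))
      simp only [hV, turanV, add_assoc, Nat.reduceAdd]; linarith
    have hfin := mul_le_mul_of_nonneg_left hin (hA (n + 1)).le
    have hfin2 := mul_le_mul_of_nonneg_left hAV (hε0 n)
    have hV1 : V (n + 1) ≤ S (n + 1) / (1 - κ / 2) := by
      rw [le_div_iff₀ hδ, mul_comm]; exact (hcross (n + 1) (by omega)).1
    have hfin3 := mul_le_mul_of_nonneg_left hV1 (hε0 n)
    have : S (n + 1) * (1 + 2 / (1 - κ / 2) * ε n)
        = S (n + 1) + 2 * (ε n * (S (n + 1) / (1 - κ / 2))) := by ring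
    rw [this]
    linarith
  obtain ⟨M, hM⟩ := gronwall_bdd (X := fun n => (S n)⁻¹) (ε := fun n => 2 / (1 - κ / 2) * ε n)
    (N := N) (fun n hn => (inv_pos.2 (hSpos n hn)).le)
    (fun n => by have := hε0 n; positivity) (hεs.mul_left _) (fun n hn => by
      have e1 := hSpos n hn
      have e2 := hSpos (n + 1) (by omega)
      rw [inv_mul_eq_div, le_div_iff₀ e1, inv_mul_le_iff₀ e2]
      exact hstep n hn)
  have hMpos : 0 < M := lt_of_lt_of_le (inv_pos.2 (hSpos N le_rfl)) (hM N le_rfl)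
  apply h5
  rw [← summable_nat_add_iff (N + 2)]
  have hs1 := (summable_nat_add_iff (N + 1)).2 hs
  have hs2 := (summable_nat_add_iff (N + 2)).2 hs
  refine Summable.of_nonneg_of_le (fun n => (one_div_pos.2 (hA _)).le) (fun n => ?_)
    (((hs1.mul_left 2).add hs2).mul_left (2 * M))
  have e1 := hM (n + N + 1) (by omega)
  have e2 := (hcross (n + N + 1) (by omega)).2
  have e3 := (hN (n + N) (by omega)).2
  have e4 := hSpos (n + N + 1) (by omega)
  simp only [← add_assoc]
  have e5 : 1 ≤ M * (2 * V (n + N + 1)) := by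
    have : 1 ≤ M * S (n + N + 1) := by
      rw [← div_le_iff₀ e4, one_div]; exact e1
    exact this.trans (by gcongr)
  rw [div_le_iff₀ (hA _)]
  refine e5.trans ?_
  have e6 := mul_le_mul_of_nonneg_right e3 (sq_nonneg (u (n + N + 1)))
  have : V (n + N + 1) ≤ (2 * u (n + N + 1) ^ 2 + u (n + N + 2) ^ 2)
      * (a (n + N + 2) * α (n + N + 2)) := by
    simp only [hV, turanV, add_assoc, Nat.reduceAdd] at e6 ⊢; linarith
  calc M * (2 * V (n + N + 1)) ≤ M * (2 * ((2 * u (n + N + 1) ^ 2 + u (n + N + 2) ^ 2)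
      * (a (n + N + 2) * α (n + N + 2)))) := by gcongr
    _ = _ := by ring

/-! ### Vanishing of the boundary form -/

/-- For every real parameter, the only generalized eigenvector in ℓ² is zero. -/
def NoL2GenEig (a b : ℕ → ℝ) : Prop :=
  ∀ (lam : ℝ) (u : ℕ → ℝ),
    (∀ n, a (n + 1) * u (n + 2) = (lam - b (n + 1)) * u (n + 1) - a n * u n) →
    (Summable fun n => u n ^ 2) → u 0 = 0 ∧ u 1 = 0

lemma memL2w_one {x : ℕ → ℂ} : MemL2w (fun _ => 1) x ↔ Summable fun n => ‖x n‖ ^ 2 := by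
  simp [MemL2w]

/-- Real and imaginary parts of a complex generalized eigenvector with real parameter are real
generalized eigenvectors. -/
lemma NoL2GenEig.complex {a b : ℕ → ℝ} (H : NoL2GenEig a b) (lam : ℝ) {x : ℕ → ℂ}
    (hx : ∀ n, jacobiAct a b x (n + 1) = lam * x (n + 1)) (hs : Summable fun n => ‖x n‖ ^ 2) :
    x 0 = 0 ∧ x 1 = 0 := by
  have hre := H lam (fun n => (x n).re) (fun n => by
      have := congrArg Complex.re (hx n)
      simp [jacobiAct] at this
      linarith)
    (Summable.of_nonneg_of_le (fun n => sq_nonneg _)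
      (fun n => by rw [← sq_abs]; gcongr; exact Complex.abs_re_le_norm _) hs)
  have him := H lam (fun n => (x n).im) (fun n => by
      have := congrArg Complex.im (hx n)
      simp [jacobiAct] at this
      linarith)
    (Summable.of_nonneg_of_le (fun n => sq_nonneg _)
      (fun n => by rw [← sq_abs]; gcongr; exact Complex.abs_im_le_norm _) hs)
  exact ⟨Complex.ext hre.1 him.1, Complex.ext hre.2 him.2⟩

lemma exists_solution {a : ℕ → ℝ} (b : ℕ → ℝ) (ha : ∀ n, 0 < a n) :
    ∃ u : ℕ → ℂ, u 0 = 1 ∧ ∀ n, jacobiAct a b u (n + 1) = 0 := by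
  let s : ℕ → ℂ × ℂ := fun n => Nat.rec (1, 0)
    (fun n p => (p.2, -((a n : ℂ) * p.1 + (b (n + 1) : ℂ) * p.2) / (a (n + 1) : ℂ))) n
  refine ⟨fun n => (s n).1, rfl, fun n => ?_⟩
  have h : (a (n + 1) : ℂ) ≠ 0 := by exact_mod_cast (ha (n + 1)).ne'
  change (a n : ℂ) * (s n).1 + (b (n + 1) : ℂ) * (s n).2 + (a (n + 1) : ℂ) *
    (-((a n : ℂ) * (s n).1 + (b (n + 1) : ℂ) * (s n).2) / (a (n + 1) : ℂ)) = 0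
  field_simp
  ring

/-- The discrete Wronskian (boundary form) of two sequences. -/
def wronsk (a : ℕ → ℝ) (f g : ℕ → ℂ) (n : ℕ) : ℂ :=
  (a n : ℂ) * (f (n + 1) * g n - f n * g (n + 1))

lemma wronsk_succ (a b : ℕ → ℝ) (f g : ℕ → ℂ) (n : ℕ) :
    wronsk a f g (n + 1) = wronsk a f g n
      + (jacobiAct a b f (n + 1) * g (n + 1) - f (n + 1) * jacobiAct a b g (n + 1)) := by
  simp only [wronsk, jacobiAct, add_assoc, Nat.reduceAdd]; ring

/-- Green's formula. -/
lemma sum_eq_wronsk (a b : ℕ → ℝ) (f g : ℕ → ℂ) (n : ℕ) :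
    ∑ k ∈ Finset.range (n + 1), (jacobiAct a b f k * g k - f k * jacobiAct a b g k)
      = wronsk a f g n := by
  induction n with
  | zero => simp [wronsk, jacobiAct]; ring
  | succ n ih => rw [Finset.sum_range_succ, ih, ← wronsk_succ]

lemma summable_norm_mul {f g : ℕ → ℂ} (hf : Summable fun n => ‖f n‖ ^ 2)
    (hg : Summable fun n => ‖g n‖ ^ 2) : Summable fun n => ‖f n‖ * ‖g n‖ :=
  Summable.of_nonneg_of_le (fun n => by positivity)
    (fun n => by nlinarith [sq_nonneg (‖f n‖ - ‖g n‖), sq_nonneg (‖f n‖), sq_nonneg (‖g n‖)])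
    (hf.add hg)

lemma summable_mul' {f g : ℕ → ℂ} (hf : Summable fun n => ‖f n‖ ^ 2)
    (hg : Summable fun n => ‖g n‖ ^ 2) : Summable fun n => f n * g n :=
  Summable.of_norm (by simpa using summable_norm_mul hf hg)

/-- If the boundary form of `f, g` in the maximal domain had a nonzero limit, Cramer's rule would
express any solution `u` of the recurrence through `f, g` and its Wronskians with them, and
Gronwall's inequality would force `u` into ℓ². -/
lemma wronsk_limit_eq_zero {a b : ℕ → ℝ} (ha : ∀ n, 0 < a n) (H : NoL2GenEig a b) {f g : ℕ → ℂ}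
    (hf : Summable fun n => ‖f n‖ ^ 2) (hg : Summable fun n => ‖g n‖ ^ 2)
    (hF : Summable fun n => ‖jacobiAct a b f n‖ ^ 2)
    (hG : Summable fun n => ‖jacobiAct a b g n‖ ^ 2)
    {w : ℂ} (hw : Tendsto (wronsk a f g) atTop (𝓝 w)) : w = 0 := by
  by_contra hw0
  obtain ⟨u, hu0, hu⟩ := exists_solution b ha
  set F := jacobiAct a b f with hFdef
  set G := jacobiAct a b g with hGdef
  set p := wronsk a u f with hp
  set q := wronsk a u g with hq
  set c := 2 / ‖w‖ with hc
  have hwpos : 0 < ‖w‖ := norm_pos_iff.2 hw0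
  have hcpos : 0 < c := by positivity
  obtain ⟨N, hN⟩ := eventually_atTop.1
    (hw.norm.eventually_const_lt (show ‖w‖ / 2 < ‖w‖ by linarith))
  have hub : ∀ n, N ≤ n → ‖u (n + 1)‖ ≤ c * (‖f (n + 1)‖ + ‖g (n + 1)‖) * (‖p n‖ + ‖q n‖) := by
    intro n hn
    have hcr : wronsk a f g n * u (n + 1) = q n * f (n + 1) - p n * g (n + 1) := by
      simp only [hp, hq, wronsk]; ring
    have h1 : ‖w‖ / 2 * ‖u (n + 1)‖ ≤ ‖wronsk a f g n * u (n + 1)‖ := by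
      rw [norm_mul]; gcongr; exact (hN n hn).le
    have h2 : ‖q n * f (n + 1) - p n * g (n + 1)‖
        ≤ (‖f (n + 1)‖ + ‖g (n + 1)‖) * (‖p n‖ + ‖q n‖) := by
      refine (norm_sub_le _ _).trans ?_
      rw [norm_mul, norm_mul]
      nlinarith [mul_nonneg (norm_nonneg (f (n + 1))) (norm_nonneg (p n)),
        mul_nonneg (norm_nonneg (g (n + 1))) (norm_nonneg (q n))]
    rw [hcr] at h1
    have h3 := mul_le_mul_of_nonneg_left (h1.trans h2) hcpos.le
    have h4 : c * (‖w‖ / 2 * ‖u (n + 1)‖) = ‖u (n + 1)‖ := by rw [hc]; field_simp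
    rw [h4] at h3
    linarith
  have hps : ∀ (h : ℕ → ℂ) n, ‖wronsk a u h (n + 1)‖
      ≤ ‖wronsk a u h n‖ + ‖u (n + 1)‖ * ‖jacobiAct a b h (n + 1)‖ := by
    intro h n
    rw [wronsk_succ a b, hu n, zero_mul, zero_sub, ← norm_mul, ← norm_neg (u (n + 1) * _)]
    exact norm_add_le _ _
  set ε : ℕ → ℝ := fun n =>
    c * ((‖f (n + 1)‖ + ‖g (n + 1)‖) * (‖F (n + 1)‖ + ‖G (n + 1)‖)) with hε
  have hεs : Summable ε := by
    have h1 := (((summable_norm_mul hf hF).add (summable_norm_mul hf hG)).add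
      ((summable_norm_mul hg hF).add (summable_norm_mul hg hG))).mul_left c
    refine ((summable_nat_add_iff 1).2 h1).congr fun n => ?_
    simp only [hε]; ring
  obtain ⟨M, hM⟩ := gronwall_bdd (X := fun n => ‖p n‖ + ‖q n‖) (ε := ε) (N := N)
    (fun n _ => by positivity) (fun n => by positivity) hεs (fun n hn => by
      have e1 := hps f n
      have e2 := hps g n
      have e3 := mul_le_mul_of_nonneg_right (hub n hn)
        (show 0 ≤ ‖F (n + 1)‖ + ‖G (n + 1)‖ by positivity)
      simp only [hε]
      linarith)
  have hus : Summable fun n => ‖u n‖ ^ 2 := by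
    rw [← summable_nat_add_iff (N + 1)]
    have h1 := (summable_nat_add_iff (N + 1)).2 ((hf.add hg).mul_left (2 * (c * M) ^ 2))
    refine Summable.of_nonneg_of_le (fun n => by positivity) (fun n => ?_) h1
    have e1 := hub (n + N) (by omega)
    have e2 := hM (n + N) (by omega)
    have e3 : ‖u (n + (N + 1))‖
        ≤ c * (‖f (n + (N + 1))‖ + ‖g (n + (N + 1))‖) * M := by
      rw [← add_assoc]; exact e1.trans (by gcongr)
    calc ‖u (n + (N + 1))‖ ^ 2
        ≤ (c * (‖f (n + (N + 1))‖ + ‖g (n + (N + 1))‖) * M) ^ 2 := by gcongr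
      _ = (c * M) ^ 2 * (‖f (n + (N + 1))‖ + ‖g (n + (N + 1))‖) ^ 2 := by ring
      _ ≤ (c * M) ^ 2 * (2 * (‖f (n + (N + 1))‖ ^ 2 + ‖g (n + (N + 1))‖ ^ 2)) := by
        gcongr; exact add_sq_le
      _ = _ := by ring
  have := (H.complex 0 (fun n => by rw [hu n]; simp) hus).1
  simp [hu0] at this

/-! ### Self-adjointness -/

lemma jacobi_symm_bilin {a b : ℕ → ℝ} (ha : ∀ n, 0 < a n) (H : NoL2GenEig a b) {f g : ℕ → ℂ}
    (hf : Summable fun n => ‖f n‖ ^ 2) (hg : Summable fun n => ‖g n‖ ^ 2)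
    (hF : Summable fun n => ‖jacobiAct a b f n‖ ^ 2)
    (hG : Summable fun n => ‖jacobiAct a b g n‖ ^ 2) :
    ∑' n, jacobiAct a b f n * g n = ∑' n, f n * jacobiAct a b g n := by
  have s1 := summable_mul' hF hg
  have s2 := summable_mul' hf hG
  have ht := (((s1.sub s2).hasSum.tendsto_sum_nat).comp (tendsto_add_atTop_nat 1))
  have hw : Tendsto (wronsk a f g) atTop
      (𝓝 (∑' n, (jacobiAct a b f n * g n - f n * jacobiAct a b g n))) :=
    ht.congr fun n => sum_eq_wronsk a b f g n
  have h0 := wronsk_limit_eq_zero ha H hf hg hF hG hw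
  rw [s1.tsum_sub s2] at h0
  exact sub_eq_zero.1 h0

lemma jacobiAct_star (a b : ℕ → ℝ) (f : ℕ → ℂ) (n : ℕ) :
    jacobiAct a b (fun k => star (f k)) n = star (jacobiAct a b f n) := by
  cases n <;> simp [jacobiAct]

lemma jacobi_symm {a b : ℕ → ℝ} (ha : ∀ n, 0 < a n) (H : NoL2GenEig a b) {x y : ℕ → ℂ}
    (hx : x ∈ DomW (fun _ => 1) (jacobiAct a b)) (hy : y ∈ DomW (fun _ => 1) (jacobiAct a b)) :
    innerW (fun _ => 1) (jacobiAct a b x) y = innerW (fun _ => 1) x (jacobiAct a b y) := by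
  obtain ⟨h1, h2⟩ := hx
  obtain ⟨h3, h4⟩ := hy
  rw [memL2w_one] at h1 h2 h3 h4
  have := jacobi_symm_bilin ha H (f := fun k => star (x k)) (g := y)
    (by simpa using h1) h3 (by simp only [jacobiAct_star, norm_star]; exact h2) h4
  simp only [jacobiAct_star] at this
  simpa only [innerW, Complex.ofReal_one, one_mul] using this

lemma summable_norm_of_finite {x : ℕ → ℂ} (N : ℕ) (h : ∀ n, N ≤ n → x n = 0) :
    Summable fun n => ‖x n‖ ^ 2 :=
  summable_of_ne_finset_zero (s := Finset.range N) fun n hn => by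
    rw [h n (by simpa using hn)]; simp

lemma jacobiAct_single_mem (a b : ℕ → ℝ) (k : ℕ) :
    Pi.single k 1 ∈ DomW (fun _ => 1) (jacobiAct a b) := by
  constructor <;> rw [memL2w_one]
  · exact summable_norm_of_finite (k + 1) fun n hn => Pi.single_eq_of_ne (by omega) _
  · refine summable_norm_of_finite (k + 2) fun n hn => ?_
    obtain ⟨m, rfl⟩ : ∃ m, n = m + 1 := ⟨n - 1, by omega⟩
    simp only [jacobiAct]
    rw [Pi.single_eq_of_ne (by omega), Pi.single_eq_of_ne (by omega),
      Pi.single_eq_of_ne (by omega)]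
    simp

/-- Pairing with the image of a basis vector recovers the formal action on an arbitrary
sequence. -/
lemma innerW_single (a b : ℕ → ℝ) (k : ℕ) (y : ℕ → ℂ) :
    innerW (fun _ => 1) (jacobiAct a b (Pi.single k 1)) y = jacobiAct a b y k := by
  have hstar : ∀ n, star (jacobiAct a b (Pi.single k 1) n) = jacobiAct a b (Pi.single k 1) n := by
    intro n
    rw [← jacobiAct_star]
    congr 1
    ext j
    by_cases h : j = k
    · subst h; simp
    · simp [Pi.single_eq_of_ne h]
  simp only [innerW, hstar, Complex.ofReal_one, one_mul]
  rw [tsum_eq_sum (s := Finset.range (k + 2))]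
  · have h := sum_eq_wronsk a b (Pi.single k 1) y (k + 1)
    have hw : wronsk a (Pi.single k 1) y (k + 1) = 0 := by
      simp only [wronsk]
      rw [Pi.single_eq_of_ne (by omega), Pi.single_eq_of_ne (by omega)]
      simp
    rw [hw, Finset.sum_sub_distrib, sub_eq_zero] at h
    rw [h, Finset.sum_eq_single k]
    · simp
    · intro j _ hj; rw [Pi.single_eq_of_ne hj]; simp
    · intro hk; simp at hk
  · intro n hn
    obtain ⟨m, rfl⟩ : ∃ m, n = m + 1 := ⟨n - 1, by simp at hn; omega⟩
    simp only [Finset.mem_range] at hn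
    simp only [jacobiAct]
    rw [Pi.single_eq_of_ne (by omega), Pi.single_eq_of_ne (by omega),
      Pi.single_eq_of_ne (by omega)]
    simp

lemma innerW_single' (k : ℕ) (z : ℕ → ℂ) :
    innerW (fun _ => 1) (Pi.single k 1) z = z k := by
  simp only [innerW]
  rw [tsum_eq_single k]
  · simp
  · intro j hj; rw [Pi.single_eq_of_ne hj]; simp

lemma jacobi_selfAdjoint {a b : ℕ → ℝ} (ha : ∀ n, 0 < a n) (H : NoL2GenEig a b) :
    IsSelfAdjointW (fun _ => 1) (jacobiAct a b) := by
  intro y z hy hz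
  constructor
  · intro h
    have hyz : jacobiAct a b y = z := by
      ext k
      rw [← innerW_single, h _ (jacobiAct_single_mem a b k), innerW_single']
    exact ⟨⟨hy, hyz ▸ hz⟩, hyz⟩
  · rintro ⟨hyD, rfl⟩ x hx
    exact jacobi_symm ha H hx hyD

/-! ### Eigenvalues -/

lemma innerW_self_ne_zero {x : ℕ → ℂ} (hs : Summable fun n => ‖x n‖ ^ 2) (hx : x ≠ 0) :
    innerW (fun _ => 1) x x ≠ 0 := by
  obtain ⟨k, hk⟩ := Function.ne_iff.1 hx
  have h : innerW (fun _ => 1) x x = ((∑' n, ‖x n‖ ^ 2 : ℝ) : ℂ) := by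
    simp only [innerW, Complex.ofReal_one, one_mul, Complex.ofReal_tsum]
    congr 1; ext n
    simpa using Complex.conj_mul' (x n)
  rw [h]
  have hpos : 0 < ∑' n, ‖x n‖ ^ 2 :=
    hs.tsum_pos (fun n => by positivity) k (by have := norm_pos_iff.2 hk; positivity)
  exact_mod_cast hpos.ne'

lemma solution_eq_zero {a b : ℕ → ℝ} (ha : ∀ n, 0 < a n) {l : ℂ} {x : ℕ → ℂ}
    (hx : ∀ n, jacobiAct a b x (n + 1) = l * x (n + 1)) (h0 : x 0 = 0) (h1 : x 1 = 0) :
    x = 0 := by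
  have : ∀ n, x n = 0 ∧ x (n + 1) = 0 := by
    intro n
    induction n with
    | zero => exact ⟨h0, h1⟩
    | succ n ih =>
      refine ⟨ih.2, ?_⟩
      have h := hx n
      simp only [jacobiAct, ih.1, ih.2, mul_zero, zero_add] at h
      exact (mul_eq_zero.1 h).resolve_left (by exact_mod_cast (ha (n + 1)).ne')
  ext n; exact (this n).1

lemma jacobi_no_eigen {a b : ℕ → ℝ} (ha : ∀ n, 0 < a n) (H : NoL2GenEig a b) {l : ℂ}
    {x : ℕ → ℂ} (hx : x ∈ DomW (fun _ => 1) (jacobiAct a b))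
    (hl : jacobiAct a b x = fun n => l * x n) : x = 0 := by
  by_contra hne
  have hs := memL2w_one.1 hx.1
  have hsym := jacobi_symm ha H hx hx
  rw [hl] at hsym
  have e1 : innerW (fun _ => 1) (fun n => l * x n) x = star l * innerW (fun _ => 1) x x := by
    simp only [innerW]; rw [← tsum_mul_left]; congr 1; ext n; simp; ring
  have e2 : innerW (fun _ => 1) x (fun n => l * x n) = l * innerW (fun _ => 1) x x := by
    simp only [innerW]; rw [← tsum_mul_left]; congr 1; ext n; simp; ring
  rw [e1, e2] at hsym
  have hreal := mul_right_cancel₀ (innerW_self_ne_zero hs hne) hsym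
  obtain ⟨r, rfl⟩ := Complex.conj_eq_iff_real.1 hreal
  have h := H.complex r (fun n => congrFun hl (n + 1)) hs
  exact hne (solution_eq_zero ha (fun n => congrFun hl (n + 1)) h.1 h.2)

/-! ### Spectrum -/

lemma real_mem_spectrum {a b : ℕ → ℝ} (H : NoL2GenEig a b) (r : ℝ) :
    (r : ℂ) ∈ spectrumW (fun _ => 1) (jacobiAct a b) := by
  rintro ⟨-, hsurj⟩
  -- a preimage of the first basis vector is a generalized eigenvector in ℓ²
  obtain ⟨x, hx, hxe⟩ := hsurj (Pi.single 0 1) (jacobiAct_single_mem a b 0).1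
  have hrec : ∀ n, jacobiAct a b x (n + 1) = r * x (n + 1) := fun n => by
    have h := congrFun hxe (n + 1)
    rw [Pi.single_eq_of_ne (by omega)] at h
    exact sub_eq_zero.1 h
  have h := H.complex r hrec (memL2w_one.1 hx.1)
  have h0 := congrFun hxe 0
  simp [jacobiAct, h.1, h.2] at h0

/-- The Hilbert space ℓ²(ℕ, ℂ). -/
abbrev L2 := lp (fun _ : ℕ => ℂ) 2

lemma memlp_iff {x : ℕ → ℂ} : Memℓp x 2 ↔ Summable fun n => ‖x n‖ ^ 2 := by
  rw [memℓp_gen_iff (by norm_num)]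
  simp

lemma L2.summable (x : L2) : Summable fun n => ‖x n‖ ^ 2 := memlp_iff.1 (lp.memℓp x)

lemma inner_eq_innerW (x y : L2) : inner ℂ x y = innerW (fun _ => 1) x y := by
  rw [lp.inner_eq_tsum]
  simp [innerW, mul_comm]

/-- The graph of the maximal Jacobi operator as a subspace of `ℓ² × ℓ²`. -/
def jacobiGraph (a b : ℕ → ℝ) : Submodule ℂ (L2 × L2) where
  carrier := {p | ∀ n, jacobiAct a b p.1 n = p.2 n}
  add_mem' := by
    intro p q hp hq n
    have h1 := hp n
    have h2 := hq n
    cases n <;> simp [jacobiAct] at h1 h2 ⊢ <;> rw [← h1, ← h2] <;> ring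
  zero_mem' := by intro n; cases n <;> simp [jacobiAct]
  smul_mem' := by
    intro c p hp n
    have h1 := hp n
    cases n <;> simp [jacobiAct] at h1 ⊢ <;> rw [← h1] <;> ring

lemma continuous_coord (n : ℕ) : Continuous fun x : L2 => x n :=
  (lp.evalCLM ℂ (fun _ : ℕ => ℂ) 2 n).continuous

lemma jacobiGraph_closed (a b : ℕ → ℝ) : IsClosed (jacobiGraph a b : Set (L2 × L2)) := by
  have : (jacobiGraph a b : Set (L2 × L2)) = ⋂ n, {p | jacobiAct a b p.1 n = p.2 n} := by
    ext p; simp [jacobiGraph]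
  rw [this]
  refine isClosed_iInter fun n => isClosed_eq ?_ ((continuous_coord n).comp continuous_snd)
  have hc : ∀ n, Continuous fun p : L2 × L2 => p.1 n := fun n =>
    (continuous_coord n).comp continuous_fst
  cases n with
  | zero =>
    exact (continuous_const.mul (hc 0)).add (continuous_const.mul (hc 1))
  | succ n =>
    exact ((continuous_const.mul (hc n)).add (continuous_const.mul (hc (n + 1)))).add
      (continuous_const.mul (hc (n + 2)))

lemma jacobiGraph_mem_dom {a b : ℕ → ℝ} {p : L2 × L2} (hp : p ∈ jacobiGraph a b) :
    (p.1 : ℕ → ℂ) ∈ DomW (fun _ => 1) (jacobiAct a b) ∧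
      jacobiAct a b p.1 = (p.2 : ℕ → ℂ) := by
  have h : jacobiAct a b p.1 = (p.2 : ℕ → ℂ) := funext hp
  exact ⟨⟨memL2w_one.2 (L2.summable _), memL2w_one.2 (h ▸ L2.summable p.2)⟩, h⟩

/-- The basic resolvent estimate `|Im l| ‖x‖ ≤ ‖(C - l) x‖`. -/
lemma im_mul_norm_le {a b : ℕ → ℝ} (ha : ∀ n, 0 < a n) (H : NoL2GenEig a b) (l : ℂ)
    {p : L2 × L2} (hp : p ∈ jacobiGraph a b) : |l.im| * ‖p.1‖ ≤ ‖p.2 - l • p.1‖ := by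
  obtain ⟨hD, hT⟩ := jacobiGraph_mem_dom hp
  have hsym : inner ℂ p.2 p.1 = inner ℂ p.1 p.2 := by
    rw [inner_eq_innerW, inner_eq_innerW, ← hT]; exact jacobi_symm ha H hD hD
  have him : (inner ℂ p.1 p.2).im = 0 := by
    have := inner_conj_symm (𝕜 := ℂ) p.1 p.2
    rw [hsym] at this
    exact Complex.conj_eq_iff_im.1 this
  have h1 : (inner ℂ p.1 (p.2 - l • p.1)).im = - (l.im * ‖p.1‖ ^ 2) := by
    rw [inner_sub_right, inner_smul_right, inner_self_eq_norm_sq_to_K, Complex.sub_im, him]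
    simp [← Complex.ofReal_pow]
  have h2 : |l.im| * ‖p.1‖ ^ 2 ≤ ‖p.1‖ * ‖p.2 - l • p.1‖ := by
    calc |l.im| * ‖p.1‖ ^ 2 = |(inner ℂ p.1 (p.2 - l • p.1)).im| := by
          rw [h1, abs_neg, abs_mul, abs_of_nonneg (sq_nonneg ‖p.1‖)]
      _ ≤ ‖inner ℂ p.1 (p.2 - l • p.1)‖ := Complex.abs_im_le_norm _
      _ ≤ _ := norm_inner_le_norm _ _
  rcases (norm_nonneg p.1).eq_or_lt with h0 | h0
  · rw [← h0, mul_zero]; positivity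
  · nlinarith

lemma nonreal_surjective {a b : ℕ → ℝ} (ha : ∀ n, 0 < a n) (H : NoL2GenEig a b) {l : ℂ}
    (hl : l.im ≠ 0) {y : ℕ → ℂ} (hy : MemL2w (fun _ => 1) y) :
    ∃ x ∈ DomW (fun _ => 1) (jacobiAct a b), (fun n => jacobiAct a b x n - l * x n) = y := by
  let G := jacobiGraph a b
  have : CompleteSpace G := (jacobiGraph_closed a b).completeSpace_coe
  let L : G →L[ℂ] L2 :=
    (ContinuousLinearMap.snd ℂ L2 L2 - l • ContinuousLinearMap.fst ℂ L2 L2).comp G.subtypeL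
  have hL : ∀ p : G, L p = p.1.2 - l • p.1.1 := fun p => rfl
  have hlpos : 0 < |l.im| := abs_pos.2 hl
  have hanti : AntilipschitzWith (1 + (1 + ‖l‖) / |l.im|).toNNReal L := by
    refine ContinuousLinearMap.antilipschitz_of_bound L fun p => ?_
    rw [Real.coe_toNNReal _ (by positivity), hL]
    have h1 := im_mul_norm_le ha H l p.2
    have h1' : ‖p.1.1‖ ≤ ‖p.1.2 - l • p.1.1‖ / |l.im| := by
      rw [le_div_iff₀ hlpos, mul_comm]; exact h1
    have h2 : ‖p.1.2‖ ≤ ‖p.1.2 - l • p.1.1‖ + ‖l‖ * ‖p.1.1‖ := by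
      rw [← norm_smul]; exact norm_le_norm_sub_add _ _
    have h3 := mul_le_mul_of_nonneg_left h1' (norm_nonneg l)
    have e : (1 + (1 + ‖l‖) / |l.im|) * ‖p.1.2 - l • p.1.1‖ = ‖p.1.2 - l • p.1.1‖
      + ‖p.1.2 - l • p.1.1‖ / |l.im| + ‖l‖ * (‖p.1.2 - l • p.1.1‖ / |l.im|) := by ring
    have h4 : 0 ≤ ‖p.1.2 - l • p.1.1‖ / |l.im| := by positivity
    have h5 : 0 ≤ ‖l‖ * (‖p.1.2 - l • p.1.1‖ / |l.im|) := by positivity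
    rw [e]
    change max ‖p.1.1‖ ‖p.1.2‖ ≤ _
    refine max_le ?_ ?_ <;> linarith [norm_nonneg (p.1.2 - l • p.1.1)]
  have hclosed : IsClosed (Set.range L) := hanti.isClosed_range L.uniformContinuous
  let R : Submodule ℂ L2 := LinearMap.range (L : G →ₗ[ℂ] L2)
  have hR : IsClosed (R : Set L2) := by
    rw [LinearMap.coe_range]; exact hclosed
  have : CompleteSpace R := hR.completeSpace_coe
  -- the orthogonal complement of the range is the kernel of the adjoint of `C - l`
  have hperp : Rᗮ = ⊥ := by
    rw [Submodule.eq_bot_iff]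
    intro v hv
    have key : ∀ x ∈ DomW (fun _ => 1) (jacobiAct a b),
        innerW (fun _ => 1) (jacobiAct a b x) v = innerW (fun _ => 1) x (star l • v : L2) := by
      intro x hx
      let X : L2 := ⟨x, memlp_iff.2 (memL2w_one.1 hx.1)⟩
      let Z : L2 := ⟨jacobiAct a b x, memlp_iff.2 (memL2w_one.1 hx.2)⟩
      have hXZ : (X, Z) ∈ G := fun n => rfl
      have h0 : inner ℂ (Z - l • X) v = 0 :=
        (Submodule.mem_orthogonal R v).1 hv _ ⟨⟨(X, Z), hXZ⟩, rfl⟩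
      rw [inner_sub_left, inner_smul_left, sub_eq_zero] at h0
      change innerW (fun _ => 1) Z v = innerW (fun _ => 1) X (star l • v : L2)
      rw [← inner_eq_innerW, ← inner_eq_innerW, h0, inner_smul_right]
      rfl
    obtain ⟨hD, hT⟩ := (jacobi_selfAdjoint ha H v (star l • v : L2)
      (memL2w_one.2 (L2.summable _)) (memL2w_one.2 (L2.summable _))).1 key
    have hv0 := jacobi_no_eigen ha H hD (l := star l) (by rw [hT]; ext n; simp)
    exact lp.ext hv0
  have htop : R = ⊤ := Submodule.orthogonal_eq_bot_iff.1 hperp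
  obtain ⟨p, hp⟩ : (⟨y, memlp_iff.2 (memL2w_one.1 hy)⟩ : L2) ∈ R := htop ▸ Submodule.mem_top
  obtain ⟨hD, hT⟩ := jacobiGraph_mem_dom p.2
  refine ⟨p.1.1, hD, ?_⟩
  have h := congrArg (fun v : L2 => (v : ℕ → ℂ)) hp
  rw [hT]
  ext n
  exact congrFun h n

/-- Theorem A: under conditions (a)–(g) on the Jacobi entries `a`, `b` and a positive
sequence `α`, the Jacobi matrix is self-adjoint, has no eigenvalues, and its
spectrum is all of ℝ. -/
theorem jacobi_selfAdjoint_no_eigen_spectrum_real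
    (a b α : ℕ → ℝ) (ha : ∀ n, 0 < a n) (hα : ∀ n, 0 < α n)
    (h1 : Tendsto a atTop atTop)
    (h2 : Summable fun n : ℕ =>
      max (-(a (n + 2) / a (n + 1) * (α (n + 2) / α (n + 1))
            - a (n + 1) / a n * (α n / α (n + 1)))) 0)
    (h3 : Summable fun n : ℕ => 1 / a n * |a n / a (n + 1) - α n / α (n + 1)|)
    (h4 : Summable fun n : ℕ => |b (n + 2) / a (n + 1) - b (n + 1) / a n * (α n / α (n + 1))|)
    (h5 : ¬ Summable fun n : ℕ => 1 / (a n * α n))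
    (h6 : Tendsto (fun n => α n / α (n + 1) * (a (n + 1) / a n)) atTop (𝓝 1))
    (h7 : limsup (fun n => ((|b n| / a n : ℝ) : EReal)) atTop < ((2 : ℝ) : EReal)) :
    IsSelfAdjointW (fun _ => 1) (jacobiAct a b) ∧
    eigenW (fun _ => 1) (jacobiAct a b) = ∅ ∧
    spectrumW (fun _ => 1) (jacobiAct a b) = Set.range ((↑) : ℝ → ℂ) := by
  have H : NoL2GenEig a b := fun lam u hu hs =>
    genEig_l2_eq_zero ha hα h1 h2 h3 h4 h5 h6 h7 hu hs
  refine ⟨jacobi_selfAdjoint ha H, ?_, ?_⟩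
  · rw [Set.eq_empty_iff_forall_notMem]
    rintro l ⟨x, hx, hne, hl⟩
    exact hne (jacobi_no_eigen ha H hx hl)
  · ext l
    constructor
    · intro hl
      by_contra hr
      have him : l.im ≠ 0 := fun h => hr ⟨l.re, Complex.ext rfl (by simp [h])⟩
      exact hl ⟨fun x hx h => jacobi_no_eigen ha H hx h,
        fun y hy => nonreal_surjective ha H him hy⟩
    · rintro ⟨r, rfl⟩
      exact real_mem_spectrum H r
end
end

section
/- Let {a_n} be positive reals, {b_n} real, and {α_n} positive reals satisfying: (a) a_n → ∞; (b) ∑_{n≥1} [ (a_{n+1}/a_n)(α_{n+1}/α_n) − (a_n/a_{n−1})(α_{n−1}/α_n) ]⁻ < ∞; (c) ∑_{n≥1} (1/a_{n−1}) | a_{n−1}/a_n − α_{n−1}/α_n | < ∞; (d) ∑_{n≥1} | b_{n+1}/a_n − (b_n/a_{n−1})(α_{n−1}/α_n) | < ∞; (e) ∑_{n≥0} 1/(a_n α_n) = ∞; (f) (α_{n−1}/α_n)(a_n/a_{n−1}) → 1; (g) limsup_{n→∞} |b_n|/a_n < 2. Then for every λ ∈ ℝ and every generalized eigenvector {u_n}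 associated with λ one has ∑_{n≥0} u_n² = ∞. -/
/-!
The proof is a discrete energy argument.  For a generalized eigenvector `u`, consider
`Sₙ = αₙ aₙ (uₙ² + kₙ uₙ₊₁² - tₙ uₙ uₙ₊₁)`, where `kₙ = (αₙ₋₁ / αₙ) (aₙ / aₙ₋₁)` and
`tₙ = (lam - bₙ₊₁) / aₙ`.

* Since `kₙ → 1` and `limsup |tₙ| < 2`, the quadratic form is eventually comparable with
  `uₙ² + uₙ₊₁²` (`eventually_coeff_bounds`, `quadForm_lower`, `quadForm_upper`).  The bound on
  `tₙ` rests on `bₙ₊₁ / aₙ` being close to `(bₙ / aₙ) kₙ` by the summability of their difference,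
  so no assumption on `aₙ₊₁ / aₙ` is needed.
* The recurrence gives an exact formula for `Sₙ₊₁ - Sₙ` (`energy_sub`) with two terms:
  relative to `αₙ aₙ`, the coefficient of `uₙ₊₁²` has summable negative part, and relative to
  `αₙ₊₁ aₙ₊₁`, the coefficient of `uₙ₊₁ uₙ₊₂` is absolutely summable.  Hence `Sₙ` is eventually
  bounded below by a positive constant (`exists_pos_lower_bound`).
* Therefore `uₙ² + uₙ₊₁² ≥ const / (αₙ aₙ)`, whose sum diverges.
-/

open Filter Topology

noncomputable section

lemma IsGenEig.sq_add_sq_pos {a b u : ℕ → ℝ} {lam : ℝ} (ha : ∀ n, 0 < a n)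
    (h : IsGenEig a b lam u) (n : ℕ) : 0 < u n ^ 2 + u (n + 1) ^ 2 := by
  have key : ¬(u n = 0 ∧ u (n + 1) = 0) := by
    induction n with
    | zero => exact h.1
    | succ n ih =>
      rintro ⟨h0, h1⟩
      have := h.2 n
      rw [h0, h1] at this
      have h2 : a n * u n = 0 := by linarith
      exact ih ⟨(mul_eq_zero.mp h2).resolve_left (ha n).ne', h0⟩
  by_contra hc
  exact key ⟨by nlinarith [sq_nonneg (u n), sq_nonneg (u (n + 1))],
    by nlinarith [sq_nonneg (u n), sq_nonneg (u (n + 1))]⟩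

lemma quadForm_lower {c k t x y : ℝ} (hc : 0 ≤ c) (hk : 1 - c ≤ k) (ht : |t| ≤ 2 - 4 * c) :
    c * (x ^ 2 + y ^ 2) ≤ x ^ 2 + k * y ^ 2 - t * (x * y) := by
  obtain ⟨h1, h2⟩ := abs_le.mp ht
  nlinarith [mul_nonneg (sub_nonneg.mpr h2) (sq_nonneg (x + y)),
    mul_nonneg (neg_le_iff_add_nonneg.mp h1) (sq_nonneg (x - y)),
    mul_nonneg (sub_nonneg.mpr hk) (sq_nonneg y), mul_nonneg hc (sq_nonneg x)]

lemma quadForm_upper {k t x y : ℝ} (hk : k ≤ 2) (ht : |t| ≤ 2) :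
    x ^ 2 + k * y ^ 2 - t * (x * y) ≤ 3 * (x ^ 2 + y ^ 2) := by
  obtain ⟨h1, h2⟩ := abs_le.mp ht
  nlinarith [mul_nonneg (sub_nonneg.mpr h2) (sq_nonneg (x - y)),
    mul_nonneg (neg_le_iff_add_nonneg.mp h1) (sq_nonneg (x + y)),
    mul_nonneg (sub_nonneg.mpr hk) (sq_nonneg y), sq_nonneg x]

/-- The quadratic energy of the pair `(uₙ₊₁, uₙ₊₂)`, with the index shifted by one so that the
ratios to the previous term make sense for every `n`. -/
def energy (a b α : ℕ → ℝ) (lam : ℝ) (u : ℕ → ℝ) (n : ℕ) : ℝ :=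
  α (n + 1) * a (n + 1) *
    (u (n + 1) ^ 2 + α n / α (n + 1) * (a (n + 1) / a n) * u (n + 2) ^ 2
      - (lam - b (n + 2)) / a (n + 1) * (u (n + 1) * u (n + 2)))

/-- By the recurrence multiplied by `aₙ₊₂ uₙ₊₃ - aₙ₊₁ uₙ₊₁`, the energy at `n` can be rewritten in
terms of the pair `(uₙ₊₂, uₙ₊₃)`; the `uₙ₊₃²` terms then cancel in the difference. -/
lemma energy_sub {a b α u : ℕ → ℝ} {lam : ℝ} (ha : ∀ n, 0 < a n) (hα : ∀ n, 0 < α n)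
    (h : IsGenEig a b lam u) (n : ℕ) :
    energy a b α lam u (n + 1) - energy a b α lam u n =
      α (n + 1) * a (n + 1) * ((a (n + 2) / a (n + 1) * (α (n + 2) / α (n + 1))
            - a (n + 1) / a n * (α n / α (n + 1))) * u (n + 2) ^ 2)
      - α (n + 2) * a (n + 2) *
        ((lam * (1 / a (n + 1) * (a (n + 1) / a (n + 2) - α (n + 1) / α (n + 2)))
          - (b (n + 3) / a (n + 2) - b (n + 2) / a (n + 1) * (α (n + 1) / α (n + 2))))
          * (u (n + 2) * u (n + 3))) := by
  have hr := h.2 (n + 1)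
  simp only [add_assoc, Nat.reduceAdd] at hr
  have h0 := (ha n).ne'
  have h1 := (ha (n + 1)).ne'
  have h2 := (ha (n + 2)).ne'
  have g1 := (hα (n + 1)).ne'
  have g2 := (hα (n + 2)).ne'
  simp only [energy, add_assoc, Nat.reduceAdd]
  field_simp
  linear_combination α (n + 1) * a n * (a (n + 2) * u (n + 3) - a (n + 1) * u (n + 1)) * hr

/-- Almost monotone positive sequences stay away from zero: each step loses at most a factor
`exp (g + 2 β)`, and these factors have a bounded product. -/
lemma exists_pos_lower_bound {S β g : ℕ → ℝ} (hS : ∀ᶠ n in atTop, 0 < S n)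
    (hβ : Summable β) (hg : Summable g) (hβ0 : ∀ n, 0 ≤ β n) (hg0 : ∀ n, 0 ≤ g n)
    (h : ∀ᶠ n in atTop, S n * (1 - β n) ≤ S (n + 1) * (1 + g n)) :
    ∃ δ > 0, ∀ᶠ n in atTop, δ ≤ S n := by
  have hβ2 : ∀ᶠ n in atTop, β n < 1 / 2 :=
    hβ.tendsto_atTop_zero.eventually_lt_const (by norm_num)
  obtain ⟨N, hN⟩ := eventually_atTop.mp (hS.and (h.and hβ2))
  have hsum : Summable fun n => g n + 2 * β n := hg.add (hβ.mul_left 2)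
  have hnn : ∀ n, 0 ≤ g n + 2 * β n := fun n => by linarith [hβ0 n, hg0 n]
  have step : ∀ n ≥ N, S n ≤ S (n + 1) * Real.exp (g n + 2 * β n) := by
    intro n hn
    obtain ⟨-, h1, h2⟩ := hN n hn
    have hp := (hN (n + 1) (by omega)).1
    have e1 : 1 + g n ≤ Real.exp (g n) := by linarith [Real.add_one_le_exp (g n)]
    have e2 : 1 + 2 * β n ≤ Real.exp (2 * β n) := by linarith [Real.add_one_le_exp (2 * β n)]
    have e3 : 1 ≤ (1 - β n) * Real.exp (2 * β n) := by
      have := mul_le_mul_of_nonneg_left e2 (by linarith : 0 ≤ 1 - β n)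
      nlinarith [hβ0 n]
    rw [Real.exp_add]
    have hp0 := (hN n hn).1
    calc S n ≤ S n * ((1 - β n) * Real.exp (2 * β n)) := le_mul_of_one_le_right hp0.le e3
      _ = S n * (1 - β n) * Real.exp (2 * β n) := by ring
      _ ≤ S (n + 1) * (1 + g n) * Real.exp (2 * β n) := by gcongr
      _ ≤ S (n + 1) * Real.exp (g n) * Real.exp (2 * β n) := by gcongr
      _ = _ := by ring
  have ind : ∀ m, S N ≤ S (N + m) *
      Real.exp (∑ i ∈ Finset.range m, (g (N + i) + 2 * β (N + i))) := by
    intro m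
    induction m with
    | zero => simp
    | succ m ih =>
      rw [Finset.sum_range_succ, add_comm (Finset.sum _ _), Real.exp_add, ← mul_assoc]
      refine ih.trans ?_
      gcongr
      exact step (N + m) (by omega)
  have hsN : Summable fun i => g (N + i) + 2 * β (N + i) := by
    simpa only [add_comm] using (summable_nat_add_iff N).mpr hsum
  set C := ∑' i, (g (N + i) + 2 * β (N + i))
  refine ⟨S N * Real.exp (-C), mul_pos (hN N le_rfl).1 (Real.exp_pos _), ?_⟩
  filter_upwards [eventually_ge_atTop N] with n hn
  obtain ⟨m, rfl⟩ := Nat.exists_eq_add_of_le hn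
  have hle : ∑ i ∈ Finset.range m, (g (N + i) + 2 * β (N + i)) ≤ C :=
    hsN.sum_le_tsum _ fun i _ => hnn _
  rw [Real.exp_neg, ← div_eq_mul_inv, div_le_iff₀ (Real.exp_pos _)]
  refine (ind m).trans ?_
  have := (hN (N + m) (by omega)).1
  gcongr

lemma eventually_coeff_bounds {a b α : ℕ → ℝ} (ha : ∀ n, 0 < a n)
    (h1 : Tendsto a atTop atTop)
    (h4 : Summable fun n : ℕ => |b (n + 2) / a (n + 1) - b (n + 1) / a n * (α n / α (n + 1))|)
    (h6 : Tendsto (fun n => α n / α (n + 1) * (a (n + 1) / a n)) atTop (𝓝 1))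
    (h7 : limsup (fun n => ((|b n| / a n : ℝ) : EReal)) atTop < ((2 : ℝ) : EReal)) (lam : ℝ) :
    ∃ c > 0, ∀ᶠ n in atTop, 1 - c ≤ α n / α (n + 1) * (a (n + 1) / a n) ∧
      α n / α (n + 1) * (a (n + 1) / a n) ≤ 2 ∧ |(lam - b (n + 2)) / a (n + 1)| ≤ 2 - 4 * c := by
  obtain ⟨q, hq1, hq2⟩ := EReal.lt_iff_exists_real_btwn.mp h7
  have hq2 : q < 2 := by exact_mod_cast hq2
  have hbq : ∀ᶠ n in atTop, |b n| / a n < q := by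
    filter_upwards [eventually_lt_of_limsup_lt hq1] with n hn
    exact_mod_cast hn
  have hq0 : 0 < q := by
    obtain ⟨n, hn⟩ := hbq.exists
    exact (div_nonneg (abs_nonneg _) (ha n).le).trans_lt hn
  -- The three errors below contribute `c`, `c` and `q * c ≤ 2 * c`, and `q + 4 * c = 2 - 4 * c`.
  set c := (2 - q) / 8 with hc
  have hc0 : 0 < c := by rw [hc]; linarith
  refine ⟨c, hc0, ?_⟩
  have hl : Tendsto (fun n => |lam| / a (n + 1)) atTop (𝓝 0) :=
    (tendsto_const_nhds.div_atTop h1).comp (tendsto_add_atTop_nat 1)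
  filter_upwards [(tendsto_add_atTop_nat 1).eventually hbq, hl.eventually_lt_const hc0,
    h4.tendsto_atTop_zero.eventually_lt_const hc0,
    h6.eventually_lt_const (show (1 : ℝ) < 1 + c by linarith),
    h6.eventually_const_lt (show 1 - c < (1 : ℝ) by linarith)] with n e1 e2 e3 e4 e5
  refine ⟨e5.le, by linarith, ?_⟩
  set k := α n / α (n + 1) * (a (n + 1) / a n) with hk
  have p0 := ha n
  have p1 := ha (n + 1)
  have hsplit : (lam - b (n + 2)) / a (n + 1) = lam / a (n + 1)
      - (b (n + 2) / a (n + 1) - b (n + 1) / a n * (α n / α (n + 1)))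
      - b (n + 1) / a (n + 1) * k := by
    rw [hk]; field_simp; ring
  have hk0 : 0 < k := by linarith
  have e6 : |b (n + 1) / a (n + 1) * k| ≤ q * (1 + c) := by
    rw [abs_mul, abs_div, abs_of_pos p1, abs_of_pos hk0]
    gcongr
  have e7 : |lam / a (n + 1)| < c := by rwa [abs_div, abs_of_pos p1]
  rw [hsplit]
  refine (abs_sub _ _).trans ?_
  have := abs_sub (lam / a (n + 1))
    (b (n + 2) / a (n + 1) - b (n + 1) / a n * (α n / α (n + 1)))
  nlinarith

/-- Under conditions (a)–(g), for every real `lam`, every generalized eigenvector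
associated with `lam` fails to be square-summable. -/
theorem genEigenvector_not_square_summable
    (a b α : ℕ → ℝ) (ha : ∀ n, 0 < a n) (hα : ∀ n, 0 < α n)
    (h1 : Tendsto a atTop atTop)
    (h2 : Summable fun n : ℕ =>
      max (-(a (n + 2) / a (n + 1) * (α (n + 2) / α (n + 1))
            - a (n + 1) / a n * (α n / α (n + 1)))) 0)
    (h3 : Summable fun n : ℕ => 1 / a n * |a n / a (n + 1) - α n / α (n + 1)|)
    (h4 : Summable fun n : ℕ => |b (n + 2) / a (n + 1) - b (n + 1) / a n * (α n / α (n + 1))|)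
    (h5 : ¬ Summable fun n : ℕ => 1 / (a n * α n))
    (h6 : Tendsto (fun n => α n / α (n + 1) * (a (n + 1) / a n)) atTop (𝓝 1))
    (h7 : limsup (fun n => ((|b n| / a n : ℝ) : EReal)) atTop < ((2 : ℝ) : EReal)) :
    ∀ (lam : ℝ) (u : ℕ → ℝ), IsGenEig a b lam u → ¬ Summable fun n => u n ^ 2 := by
  intro lam u hu hsum
  obtain ⟨c, hc0, hcoef⟩ := eventually_coeff_bounds ha h1 h4 h6 h7 lam
  have hlow : ∀ᶠ n in atTop, α (n + 1) * a (n + 1) * (c * (u (n + 1) ^ 2 + u (n + 2) ^ 2)) ≤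
      energy a b α lam u n := by
    filter_upwards [hcoef] with n ⟨e1, _, e3⟩
    exact mul_le_mul_of_nonneg_left (quadForm_lower hc0.le e1 e3)
      (mul_pos (hα _) (ha _)).le
  have hup : ∀ᶠ n in atTop, energy a b α lam u n ≤
      α (n + 1) * a (n + 1) * (3 * (u (n + 1) ^ 2 + u (n + 2) ^ 2)) := by
    filter_upwards [hcoef] with n ⟨_, e2, e3⟩
    exact mul_le_mul_of_nonneg_left (quadForm_upper e2 (by linarith))
      (mul_pos (hα _) (ha _)).le
  have hpos : ∀ᶠ n in atTop, 0 < energy a b α lam u n := by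
    filter_upwards [hlow] with n hn
    exact (mul_pos (mul_pos (hα _) (ha _))
      (mul_pos hc0 (hu.sq_add_sq_pos ha (n + 1)))).trans_le hn
  set β : ℕ → ℝ := fun n => max (-(a (n + 2) / a (n + 1) * (α (n + 2) / α (n + 1))
            - a (n + 1) / a n * (α n / α (n + 1)))) 0 with hβ
  set γ : ℕ → ℝ := fun n =>
    |lam| * (1 / a (n + 1) * |a (n + 1) / a (n + 2) - α (n + 1) / α (n + 2)|)
      + |b (n + 3) / a (n + 2) - b (n + 2) / a (n + 1) * (α (n + 1) / α (n + 2))| with hγ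
  have hβ0 : ∀ n, 0 ≤ β n := fun n => le_max_right _ _
  have hγ0 : ∀ n, 0 ≤ γ n := fun n => by
    have := (ha (n + 1)).le
    simp only [hγ]; positivity
  have hγs : Summable γ :=
    (((summable_nat_add_iff 1).mpr h3).mul_left |lam|).add ((summable_nat_add_iff 1).mpr h4)
  have hstep : ∀ᶠ n in atTop, energy a b α lam u n * (1 - β n / c) ≤
      energy a b α lam u (n + 1) * (1 + γ n / c) := by
    filter_upwards [hlow, (tendsto_add_atTop_nat 1).eventually hlow] with n l0 l1
    simp only [add_assoc, Nat.reduceAdd] at l1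
    have hid := energy_sub ha hα hu n
    set B := a (n + 2) / a (n + 1) * (α (n + 2) / α (n + 1))
            - a (n + 1) / a n * (α n / α (n + 1)) with hB
    set G := lam * (1 / a (n + 1) * (a (n + 1) / a (n + 2) - α (n + 1) / α (n + 2)))
          - (b (n + 3) / a (n + 2) - b (n + 2) / a (n + 1) * (α (n + 1) / α (n + 2))) with hG
    have hBβ : -B ≤ β n := le_max_left _ _
    have hGγ : |G| ≤ γ n := by
      refine (abs_sub _ _).trans (le_of_eq ?_)
      rw [abs_mul, abs_mul, abs_of_pos (one_div_pos.mpr (ha (n + 1)))]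
    have w1 : 0 < α (n + 1) * a (n + 1) := mul_pos (hα _) (ha _)
    have w2 : 0 < α (n + 2) * a (n + 2) := mul_pos (hα _) (ha _)
    set E0 := energy a b α lam u n
    set E1 := energy a b α lam u (n + 1)
    have f1 : -(β n / c * E0) ≤ α (n + 1) * a (n + 1) * (B * u (n + 2) ^ 2) := by
      have i1 : -(B * u (n + 2) ^ 2) ≤ β n * (u (n + 1) ^ 2 + u (n + 2) ^ 2) := by
        nlinarith [mul_nonneg (hβ0 n) (sq_nonneg (u (n + 1))), sq_nonneg (u (n + 2))]
      have i2 := mul_le_mul_of_nonneg_left i1 w1.le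
      have i3 := mul_le_mul_of_nonneg_left l0 (div_nonneg (hβ0 n) hc0.le)
      have i4 : β n / c * (α (n + 1) * a (n + 1) * (c * (u (n + 1) ^ 2 + u (n + 2) ^ 2))) =
        α (n + 1) * a (n + 1) * (β n * (u (n + 1) ^ 2 + u (n + 2) ^ 2)) := by
        field_simp
      linarith
    have f2 : α (n + 2) * a (n + 2) * (G * (u (n + 2) * u (n + 3))) ≤ γ n / c * E1 := by
      have i1 : G * (u (n + 2) * u (n + 3)) ≤ γ n * (u (n + 2) ^ 2 + u (n + 3) ^ 2) := by
        have j : |u (n + 2) * u (n + 3)| ≤ u (n + 2) ^ 2 + u (n + 3) ^ 2 := by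
          rw [abs_le]
          constructor <;> nlinarith [sq_nonneg (u (n + 2) + u (n + 3)),
            sq_nonneg (u (n + 2) - u (n + 3)), sq_nonneg (u (n + 2)), sq_nonneg (u (n + 3))]
        refine (le_abs_self _).trans ?_
        rw [abs_mul]
        exact mul_le_mul hGγ j (abs_nonneg _) (hγ0 n)
      have i2 := mul_le_mul_of_nonneg_left i1 w2.le
      have i3 := mul_le_mul_of_nonneg_left l1 (div_nonneg (hγ0 n) hc0.le)
      have i4 : γ n / c * (α (n + 2) * a (n + 2) * (c * (u (n + 2) ^ 2 + u (n + 3) ^ 2))) =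
        α (n + 2) * a (n + 2) * (γ n * (u (n + 2) ^ 2 + u (n + 3) ^ 2)) := by
        field_simp
      linarith
    linarith
  obtain ⟨δ, hδ, hδS⟩ := exists_pos_lower_bound hpos (h2.div_const c) (hγs.div_const c)
    (fun n => div_nonneg (hβ0 n) hc0.le) (fun n => div_nonneg (hγ0 n) hc0.le) hstep
  apply h5
  rw [← summable_nat_add_iff 1]
  have hmaj : Summable fun n => 3 / δ * (u (n + 1) ^ 2 + u (n + 2) ^ 2) :=
    (((summable_nat_add_iff 1).mpr hsum).add ((summable_nat_add_iff 2).mpr hsum)).mul_left _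
  refine hmaj.of_norm_bounded_eventually_nat ?_
  filter_upwards [hup, hδS] with n e1 e2
  have w : 0 < a (n + 1) * α (n + 1) := mul_pos (ha _) (hα _)
  rw [Real.norm_of_nonneg (one_div_pos.mpr w).le, div_le_iff₀ w, div_mul_eq_mul_div,
    div_mul_eq_mul_div, le_div_iff₀ hδ]
  linarith
end
end

section
/- Let {a_n} be positive reals and {b_n} real with: (a) a_n → ∞; (b) ∑_{n≥0} 1/a_n² = ∞; (c) ∑_{n≥0} [ (a_{n+1}/a_n)² − 1 ]⁻ < ∞; (d) limsup_{n→∞} |b_n|/a_n < 2; (e) ∑_{n≥0} |b_{n+1} − b_n|/a_n < ∞. Then for every λ ∈ ℝ and every generalized eigenvector {u_n} associated with λ one has ∑_{n≥0} u_n² = ∞. -/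
/-!
The proof follows the quadratic form
`Sₙ = aₙ² (uₙ² + uₙ₊₁²) - (lam - bₙ) aₙ uₙ uₙ₊₁`.
The recurrence says that `aₙ₊₁ uₙ₊₂` and `aₙ uₙ` add up to `(lam - bₙ₊₁) uₙ₊₁`, and this gives
`Sₙ₊₁ - Sₙ = (aₙ₊₁² - aₙ²) uₙ₊₁² + (bₙ₊₁ - bₙ) aₙ uₙ uₙ₊₁` (`turan_step`).

Since `limsup |bₙ| / aₙ < 2` and `aₙ → ∞`, there is `c > 0` with `|lam - bₙ| ≤ 2 (1 - c) aₙ` for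
large `n`, hence `c aₙ² (uₙ² + uₙ₊₁²) ≤ Sₙ ≤ 2 aₙ² (uₙ² + uₙ₊₁²)`. The increment formula then yields
`Sₙ₊₁ ≥ (1 - rₙ) Sₙ` with `r` summable, so `Sₙ` stays above some `δ > 0`
(`exists_pos_lower_bound`). Therefore `uₙ² + uₙ₊₁² ≥ δ / (2 aₙ²)`, and the right-hand side is not
summable.
-/

open Filter Topology

noncomputable section

/-- The quadratic form `aₙ² (uₙ² + uₙ₊₁²) - (lam - bₙ) aₙ uₙ uₙ₊₁`. -/
def turan (a b : ℕ → ℝ) (lam : ℝ) (u : ℕ → ℝ) (n : ℕ) : ℝ :=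
  a n ^ 2 * (u n ^ 2 + u (n + 1) ^ 2) - (lam - b n) * a n * u n * u (n + 1)

lemma turan_step {a b : ℕ → ℝ} {lam : ℝ} {u : ℕ → ℝ} (hu : IsGenEig a b lam u) (n : ℕ) :
    turan a b lam u (n + 1) - turan a b lam u n =
      (a (n + 1) ^ 2 - a n ^ 2) * u (n + 1) ^ 2 + (b (n + 1) - b n) * a n * u n * u (n + 1) := by
  have h := hu.2 n
  unfold turan
  linear_combination (a (n + 1) * u (n + 2) - a n * u n) * h

lemma IsGenEig.ne_zero {a b : ℕ → ℝ} {lam : ℝ} {u : ℕ → ℝ} (ha : ∀ n, 0 < a n)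
    (hu : IsGenEig a b lam u) (n : ℕ) : ¬(u n = 0 ∧ u (n + 1) = 0) := by
  induction n with
  | zero => exact hu.1
  | succ n ih =>
    rintro ⟨h0, h1⟩
    have h := hu.2 n
    rw [h0, h1] at h
    have h' : a n * u n = 0 := by linarith
    exact ih ⟨(mul_eq_zero.mp h').resolve_left (ha n).ne.symm, h0⟩

/-- A sequence that is eventually positive and loses at most a summable proportion at each step
is bounded away from zero. -/
lemma exists_pos_lower_bound_s3 {S r : ℕ → ℝ} (hr0 : ∀ n, 0 ≤ r n) (hr : Summable r) {N : ℕ}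
    (hS : ∀ n ≥ N, 0 < S n) (hstep : ∀ n ≥ N, (1 - r n) * S n ≤ S (n + 1)) :
    ∃ δ > 0, ∃ M, ∀ n, δ ≤ S (n + M) := by
  -- Beyond `M` the tail of `r` is at most `1 / 2`, so `∏ (1 - r) ≥ 1 - ∑ r ≥ 1 / 2`.
  obtain ⟨M, hMN, hM⟩ : ∃ M ≥ N, ∑' k, r (k + M) < 1 / 2 :=
    ((eventually_ge_atTop N).and
      ((tendsto_sum_nat_add r).eventually_lt_const (by norm_num))).exists
  have hsum : Summable fun k => r (k + M) := (summable_nat_add_iff M).2 hr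
  have hle : ∀ n, ∑ k ∈ Finset.range n, r (k + M) ≤ 1 / 2 := fun n =>
    (hsum.sum_le_tsum _ fun k _ => hr0 _).trans hM.le
  have hle1 : ∀ n, r (n + M) ≤ 1 / 2 := fun n =>
    (hsum.le_tsum n fun k _ => hr0 _).trans hM.le
  have key : ∀ n, (1 - ∑ k ∈ Finset.range n, r (k + M)) * S M ≤ S (n + M) := by
    intro n
    induction n with
    | zero => simp
    | succ n ih =>
      rw [Finset.sum_range_succ]
      have h := hstep (n + M) (by omega)
      rw [show n + M + 1 = n + 1 + M by ring] at h
      have hA : 0 ≤ ∑ k ∈ Finset.range n, r (k + M) := Finset.sum_nonneg fun k _ => hr0 _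
      have h2 := mul_le_mul_of_nonneg_left ih (show 0 ≤ 1 - r (n + M) by linarith [hle1 n])
      have h3 : 0 ≤ (∑ k ∈ Finset.range n, r (k + M)) * r (n + M) * S M :=
        mul_nonneg (mul_nonneg hA (hr0 _)) (hS M hMN).le
      nlinarith
  refine ⟨1 / 2 * S M, by linarith [hS M hMN], M, fun n => le_trans ?_ (key n)⟩
  exact mul_le_mul_of_nonneg_right (by linarith [hle n]) (hS M hMN).le

lemma eventually_abs_sub_le {a b : ℕ → ℝ} (ha : ∀ n, 0 < a n) (h1 : Tendsto a atTop atTop)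
    (h4 : limsup (fun n => ((|b n| / a n : ℝ) : EReal)) atTop < ((2 : ℝ) : EReal)) (lam : ℝ) :
    ∃ c > 0, ∀ᶠ n in atTop, |lam - b n| ≤ 2 * (1 - c) * a n := by
  obtain ⟨q, hq, hq2⟩ := EReal.lt_iff_exists_real_btwn.1 h4
  have hq2 : q < 2 := by exact_mod_cast hq2
  -- `c` leaves the room `(2 - q) / 2 * a n` for `|lam|`.
  refine ⟨(2 - q) / 4, by linarith, ?_⟩
  filter_upwards [eventually_lt_of_limsup_lt hq,
    h1.eventually_ge_atTop (|lam| / ((2 - q) / 2))] with n hn hl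
  have hn : |b n| / a n < q := by exact_mod_cast hn
  rw [div_lt_iff₀ (ha n)] at hn
  rw [div_le_iff₀ (by linarith)] at hl
  have := abs_sub lam (b n)
  nlinarith

lemma turan_bounds {a b : ℕ → ℝ} {lam c : ℝ} (u : ℕ → ℝ) (ha : ∀ n, 0 < a n) (hc : 0 < c) {n : ℕ}
    (h : |lam - b n| ≤ 2 * (1 - c) * a n) :
    c * (a n ^ 2 * (u n ^ 2 + u (n + 1) ^ 2)) ≤ turan a b lam u n ∧
      turan a b lam u n ≤ 2 * (a n ^ 2 * (u n ^ 2 + u (n + 1) ^ 2)) := by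
  have han := ha n
  have huv : 2 * |u n * u (n + 1)| ≤ u n ^ 2 + u (n + 1) ^ 2 := by
    rw [abs_mul, ← sq_abs (u n), ← sq_abs (u (n + 1))]
    nlinarith [sq_nonneg (|u n| - |u (n + 1)|)]
  have h1c : 0 ≤ (1 - c) * a n := by linarith [abs_nonneg (lam - b n)]
  have hx : |(lam - b n) * a n * u n * u (n + 1)| ≤
      (1 - c) * (a n ^ 2 * (u n ^ 2 + u (n + 1) ^ 2)) := by
    calc |(lam - b n) * a n * u n * u (n + 1)|
        = |lam - b n| * a n * |u n * u (n + 1)| := by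
          rw [mul_assoc, abs_mul, abs_mul, abs_of_pos han]
      _ ≤ 2 * (1 - c) * a n * a n * |u n * u (n + 1)| := by gcongr
      _ = (1 - c) * a n * a n * (2 * |u n * u (n + 1)|) := by ring
      _ ≤ (1 - c) * a n * a n * (u n ^ 2 + u (n + 1) ^ 2) :=
          mul_le_mul_of_nonneg_left huv (mul_nonneg h1c han.le)
      _ = _ := by ring
  have hp : 0 ≤ a n ^ 2 * (u n ^ 2 + u (n + 1) ^ 2) := by positivity
  obtain ⟨hl, hr⟩ := abs_le.1 hx
  unfold turan
  constructor <;> nlinarith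

lemma turan_step_ge {a b : ℕ → ℝ} {lam : ℝ} {u : ℕ → ℝ} (ha : ∀ n, 0 < a n)
    (hu : IsGenEig a b lam u) (n : ℕ) :
    -((max (-((a (n + 1) / a n) ^ 2 - 1)) 0 + |b (n + 1) - b n| / a n) *
      (a n ^ 2 * (u n ^ 2 + u (n + 1) ^ 2))) ≤
      turan a b lam u (n + 1) - turan a b lam u n := by
  have han := ha n
  rw [turan_step hu]
  set ρ := max (-((a (n + 1) / a n) ^ 2 - 1)) 0
  have hρ0 : 0 ≤ ρ := le_max_right _ _
  have hρ : a n ^ 2 - a (n + 1) ^ 2 ≤ ρ * a n ^ 2 := by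
    have h : -((a (n + 1) / a n) ^ 2 - 1) ≤ ρ := le_max_left _ _
    have h' := mul_le_mul_of_nonneg_right h (sq_nonneg (a n))
    have e : -((a (n + 1) / a n) ^ 2 - 1) * a n ^ 2 = a n ^ 2 - a (n + 1) ^ 2 := by
      field_simp
      ring
    linarith
  have h1 := mul_le_mul_of_nonneg_right hρ (sq_nonneg (u (n + 1)))
  have h1' : 0 ≤ ρ * a n ^ 2 * u n ^ 2 := by positivity
  have huv : |u n * u (n + 1)| ≤ u n ^ 2 + u (n + 1) ^ 2 := by
    rw [abs_mul, ← sq_abs (u n), ← sq_abs (u (n + 1))]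
    nlinarith [sq_nonneg (|u n| - |u (n + 1)|), sq_nonneg (|u n|), sq_nonneg (|u (n + 1)|)]
  have h2 : |(b (n + 1) - b n) * a n * u n * u (n + 1)| ≤
      |b (n + 1) - b n| / a n * (a n ^ 2 * (u n ^ 2 + u (n + 1) ^ 2)) := by
    calc |(b (n + 1) - b n) * a n * u n * u (n + 1)|
        = |b (n + 1) - b n| * a n * |u n * u (n + 1)| := by
          rw [mul_assoc, abs_mul, abs_mul, abs_of_pos han]
      _ ≤ |b (n + 1) - b n| * a n * (u n ^ 2 + u (n + 1) ^ 2) := by gcongr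
      _ = _ := by field_simp
  have h3 := (abs_le.1 h2).1
  linarith

/-- Under conditions (a)–(e) of Corollary B, for every real `lam`, every generalized
eigenvector associated with `lam` fails to be square-summable. -/
theorem genEigenvector_not_square_summable_sq
    (a b : ℕ → ℝ) (ha : ∀ n, 0 < a n)
    (h1 : Tendsto a atTop atTop)
    (h2 : ¬ Summable fun n : ℕ => 1 / a n ^ 2)
    (h3 : Summable fun n : ℕ => max (-((a (n + 1) / a n) ^ 2 - 1)) 0)
    (h4 : limsup (fun n => ((|b n| / a n : ℝ) : EReal)) atTop < ((2 : ℝ) : EReal))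
    (h5 : Summable fun n : ℕ => |b (n + 1) - b n| / a n) :
    ∀ (lam : ℝ) (u : ℕ → ℝ), IsGenEig a b lam u → ¬ Summable fun n => u n ^ 2 := by
  intro lam u hu hsum
  obtain ⟨c, hc, hev⟩ := eventually_abs_sub_le ha h1 h4 lam
  obtain ⟨N, hN⟩ := eventually_atTop.1 hev
  set r : ℕ → ℝ := fun n =>
    c⁻¹ * (max (-((a (n + 1) / a n) ^ 2 - 1)) 0 + |b (n + 1) - b n| / a n) with hr
  have hr0 : ∀ n, 0 ≤ r n := fun n =>
    mul_nonneg (inv_nonneg.2 hc.le)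
      (add_nonneg (le_max_right _ _) (div_nonneg (abs_nonneg _) (ha n).le))
  have hpos : ∀ n, 0 < a n ^ 2 * (u n ^ 2 + u (n + 1) ^ 2) := by
    intro n
    refine mul_pos (pow_pos (ha n) 2) ?_
    rcases not_and_or.1 (hu.ne_zero ha n) with h | h
    · exact add_pos_of_pos_of_nonneg (by positivity) (sq_nonneg _)
    · exact add_pos_of_nonneg_of_pos (sq_nonneg _) (by positivity)
  obtain ⟨δ, hδ, M, hM⟩ := exists_pos_lower_bound_s3 (S := turan a b lam u) hr0
    ((h3.add h5).mul_left c⁻¹) (N := N)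
    (fun n hn => (mul_pos hc (hpos n)).trans_le (turan_bounds u ha hc (hN n hn)).1)
    (fun n hn => by
      have hs := turan_step_ge ha hu n
      have hb := mul_le_mul_of_nonneg_left (turan_bounds u ha hc (hN n hn)).1 (hr0 n)
      have e : r n * (c * (a n ^ 2 * (u n ^ 2 + u (n + 1) ^ 2))) =
          (max (-((a (n + 1) / a n) ^ 2 - 1)) 0 + |b (n + 1) - b n| / a n) *
            (a n ^ 2 * (u n ^ 2 + u (n + 1) ^ 2)) := by
        simp only [hr]
        field_simp
      linarith)
  apply h2
  rw [← summable_nat_add_iff (M + N)]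
  have hsum2 : Summable fun n => 2 / δ * (u n ^ 2 + u (n + 1) ^ 2) :=
    (hsum.add ((summable_nat_add_iff 1).2 hsum)).mul_left _
  refine Summable.of_nonneg_of_le (fun n => by positivity) (fun n => ?_)
    ((summable_nat_add_iff (M + N)).2 hsum2)
  have hl := hM (n + N)
  rw [show n + N + M = n + (M + N) by ring] at hl
  have hub := (turan_bounds u ha hc (hN (n + (M + N)) (by omega))).2
  have hap := ha (n + (M + N))
  rw [div_le_iff₀ (by positivity), div_mul_eq_mul_div, div_mul_eq_mul_div, le_div_iff₀ hδ]
  linarith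
end
end

section
/- Let {a_n} be positive reals, {b_n} real, {α_n} positive reals, λ ∈ ℝ, and let {u_n} be a generalized eigenvector associated with λ. Set S_n = a_{n−1} α_{n−1} u_{n−1}² + a_n α_n u_n² − (λ − b_n) α_{n−1} u_{n−1} u_n and S̃_n = u_{n+1}² + u_n². Assume a_n → ∞, (α_{n−1}/α_n)(a_n/a_{n−1}) → 1, and limsup_{n→∞} |b_n|/a_n < 2. Then there exist constants c₁ > 0, c₂ > 0 and N ∈ ℕ such that for all n ≥ N: c₁ a_n α_n S̃_n ≤ S_n ≤ c₂ a_n α_n S̃_n. -/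
/-!
Writing `t = (lam - bₙ) / aₙ` and `r = (αₙ₋₁ / αₙ) (aₙ / aₙ₋₁)`, the recurrence eliminates `uₙ₋₁`
from `Sₙ` and gives
`Sₙ = aₙ αₙ (uₙ² + r uₙ₊₁² - r t uₙ uₙ₊₁)`.
Since `aₙ → ∞` and `limsup |bₙ| / aₙ < 2`, eventually `|t| ≤ 2 - 2d` for some `0 < d ≤ 1`, while
`r → 1`. Hence the quadratic form in the bracket is eventually uniformly positive definite and
bounded (`form_bounds`).
-/

open Filter Topology

noncomputable section

/-- Uniform two-sided bounds for the form `y² + r z² - r t y z` with `r` near `1` and `|t|` away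
from `2`; they come from `|y z| ≤ (y² + z²) / 2`. -/
lemma form_bounds {r t d : ℝ} (y z : ℝ) (hd : 0 < d) (hd1 : d ≤ 1) (ht : |t| ≤ 2 - 2 * d)
    (hr : 1 / 2 ≤ r) (hr' : r ≤ 1 + d) :
    d ^ 2 / 2 * (z ^ 2 + y ^ 2) ≤ y ^ 2 + r * z ^ 2 - r * t * y * z ∧
      y ^ 2 + r * z ^ 2 - r * t * y * z ≤ 4 * (z ^ 2 + y ^ 2) := by
  have hyz : |y * z| ≤ (y ^ 2 + z ^ 2) / 2 := by
    rw [abs_le]; constructor <;> nlinarith [sq_nonneg (y - z), sq_nonneg (y + z)]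
  have hcross : |r * t * y * z| ≤ r * (1 - d) * (y ^ 2 + z ^ 2) := by
    have h : |t| * |y * z| ≤ (2 - 2 * d) * ((y ^ 2 + z ^ 2) / 2) :=
      mul_le_mul ht hyz (abs_nonneg _) (by linarith)
    calc |r * t * y * z| = r * (|t| * |y * z|) := by
          rw [show r * t * y * z = r * (t * (y * z)) by ring, abs_mul, abs_mul t,
            abs_of_nonneg (by linarith : 0 ≤ r)]
      _ ≤ r * ((2 - 2 * d) * ((y ^ 2 + z ^ 2) / 2)) :=
          mul_le_mul_of_nonneg_left h (by linarith)
      _ = _ := by ring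
  obtain ⟨hl, hu⟩ := abs_le.mp hcross
  have hrd : r * (1 - d) ≤ 1 - d ^ 2 := by nlinarith
  have hy := sq_nonneg y
  have hz := sq_nonneg z
  constructor
  · have e1 : 0 ≤ (1 - r * (1 - d) - d ^ 2 / 2) * y ^ 2 :=
      mul_nonneg (by nlinarith [sq_nonneg d]) hy
    have e2 : 0 ≤ (r * d - d ^ 2 / 2) * z ^ 2 := mul_nonneg (by nlinarith) hz
    nlinarith
  · have e1 : 0 ≤ (1 - r * (1 - d)) * (y ^ 2 + z ^ 2) :=
      mul_nonneg (by nlinarith [sq_nonneg d]) (by linarith)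
    have e2 : 0 ≤ (2 - r) * z ^ 2 := mul_nonneg (by linarith) hz
    nlinarith

/-- Proposition 4: two-sided comparison of `Sₙ` with `aₙ αₙ (uₙ₊₁² + uₙ²)`. -/
theorem S_comparable_aalpha
    (a b α : ℕ → ℝ) (ha : ∀ n, 0 < a n) (hα : ∀ n, 0 < α n)
    (lam : ℝ) (u : ℕ → ℝ) (hu : IsGenEig a b lam u)
    (S : ℕ → ℝ)
    (hS : ∀ n : ℕ, S (n + 1) =
      a n * α n * u n ^ 2 + a (n + 1) * α (n + 1) * u (n + 1) ^ 2
        - (lam - b (n + 1)) * α n * u n * u (n + 1))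
    (h1 : Tendsto a atTop atTop)
    (h6 : Tendsto (fun n => α n / α (n + 1) * (a (n + 1) / a n)) atTop (𝓝 1))
    (h7 : limsup (fun n => ((|b n| / a n : ℝ) : EReal)) atTop < ((2 : ℝ) : EReal)) :
    ∃ c₁ > (0 : ℝ), ∃ c₂ > (0 : ℝ), ∃ N : ℕ, ∀ n ≥ N,
      c₁ * (a n * α n) * (u (n + 1) ^ 2 + u n ^ 2) ≤ S n ∧
      S n ≤ c₂ * (a n * α n) * (u (n + 1) ^ 2 + u n ^ 2) := by
  obtain ⟨c, hc, hc2⟩ := EReal.lt_iff_exists_real_btwn.mp h7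
  have hc2 : c < 2 := EReal.coe_lt_coe_iff.mp hc2
  have hb : ∀ᶠ n in atTop, |b n| / a n < c := by
    filter_upwards [eventually_lt_of_limsup_lt hc] with n hn
    exact EReal.coe_lt_coe_iff.mp hn
  have hc0 : 0 < c := by
    obtain ⟨n, hn⟩ := hb.exists
    exact lt_of_le_of_lt (div_nonneg (abs_nonneg _) (ha n).le) hn
  -- With this `d`, one has `c + (2 - c) / 2 = 2 - 2 * d`.
  obtain ⟨d, hd⟩ : ∃ d, d = (2 - c) / 4 := ⟨_, rfl⟩
  have hl : ∀ᶠ n in atTop, |lam| / a n < (2 - c) / 2 :=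
    (h1.const_div_atTop |lam|).eventually_lt_const (by linarith)
  have hr1 := h6.eventually_const_lt (show (1 / 2 : ℝ) < 1 by norm_num)
  have hr2 := h6.eventually_lt_const (show (1 : ℝ) < 1 + d by linarith)
  obtain ⟨N₁, hN₁⟩ := eventually_atTop.mp (hb.and hl)
  obtain ⟨N₂, hN₂⟩ := eventually_atTop.mp (hr1.and hr2)
  refine ⟨d ^ 2 / 2, by rw [hd]; have : 0 < 2 - c := by linarith
                        positivity, 4, by norm_num, max N₁ N₂ + 1, fun n hn => ?_⟩
  obtain ⟨m, rfl⟩ : ∃ m, n = m + 1 := ⟨n - 1, by omega⟩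
  obtain ⟨hbm, hlm⟩ := hN₁ (m + 1) (by omega)
  obtain ⟨hr, hr'⟩ := hN₂ m (by omega)
  have hp := ha m
  have hP := ha (m + 1)
  have hA := hα (m + 1)
  have ht : |(lam - b (m + 1)) / a (m + 1)| ≤ 2 - 2 * d := by
    rw [abs_div, abs_of_pos hP]
    calc |lam - b (m + 1)| / a (m + 1) ≤ (|lam| + |b (m + 1)|) / a (m + 1) := by
          gcongr; exact abs_sub _ _
      _ = |lam| / a (m + 1) + |b (m + 1)| / a (m + 1) := add_div _ _ _
      _ ≤ 2 - 2 * d := by linarith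
  obtain ⟨hlo, hup⟩ := form_bounds (u (m + 1)) (u (m + 2)) (by linarith) (by linarith) ht
    hr.le hr'.le
  have hx : u m = ((lam - b (m + 1)) * u (m + 1) - a (m + 1) * u (m + 2)) / a m := by
    rw [eq_div_iff hp.ne']; linarith [hu.2 m]
  have key : S (m + 1) = a (m + 1) * α (m + 1) *
      (u (m + 1) ^ 2 + α m / α (m + 1) * (a (m + 1) / a m) * u (m + 2) ^ 2
        - α m / α (m + 1) * (a (m + 1) / a m) * ((lam - b (m + 1)) / a (m + 1))
          * u (m + 1) * u (m + 2)) := by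
    rw [hS, hx]; field_simp; ring
  have hPA := (mul_pos hP hA).le
  rw [key]
  constructor
  · linarith [mul_le_mul_of_nonneg_left hlo hPA]
  · linarith [mul_le_mul_of_nonneg_left hup hPA]
end
end
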